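/- arXiv:math/9705223 — 2 statements merged into one kernel-verified Lean document; each statement's English description precedes it below -/
import Mathlib

section
/- Let n \ge 2 and a \ge 1 be integers. There exists an integer N (depending on n and a) such that for every odd integer q > N the following holds. If a is even, writing g(y) := y^{2n+1} \cdot (1 + y^2 + ... + y^{2a-2})^{n-1} \cdot (1 + y^2 + ... + y^{a-2})^2 = \sum_k g_k y^k, then a^{n+1} \cdot N_C(n,q,0,a) = 4 \sum_k g_k (q-k)^n. If a is odd, writing g(y) := y^{2n} \cdot (1 + y^2 + ... + y^{2a-2})^{n-1} \cdot (1 + y + ... + y^{a-1})^2 = \sum_k g_k y^k, then a^{n+1} \cdot N_C(n,q,0,a) = \sum_k g_k (q-k)^n. -/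
open Polynomial

/-- `x` avoids the integer interval `[u, v]` in `ZMod q`. -/
def Avoids {q : ℕ} (x : ZMod q) (u v : ℤ) : Prop :=
  ∀ k : ℤ, u ≤ k → k ≤ v → x ≠ (k : ZMod q)

/-- Count for the type `B` deformation: `x_i`, `x_i - x_j` and `x_i + x_j`
all avoid `[u, v]`. -/
noncomputable def N_B (n q : ℕ) (u v : ℤ) : ℕ :=
  Set.ncard {x : Fin n → ZMod q |
    (∀ i, Avoids (x i) u v) ∧
    ∀ i j : Fin n, i < j → Avoids (x i - x j) u v ∧ Avoids (x i + x j) u v}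

/-- Count for the type `C` deformation: `2x_i`, `x_i - x_j` and `x_i + x_j`
all avoid `[u, v]`. -/
noncomputable def N_C (n q : ℕ) (u v : ℤ) : ℕ :=
  Set.ncard {x : Fin n → ZMod q |
    (∀ i, Avoids (2 * x i) u v) ∧
    ∀ i j : Fin n, i < j → Avoids (x i - x j) u v ∧ Avoids (x i + x j) u v}

/-- Count for the type `BC` deformation: `x_i`, `2x_i`, `x_i - x_j` and `x_i + x_j`
all avoid `[u, v]`. -/
noncomputable def N_BC (n q : ℕ) (u v : ℤ) : ℕ :=
  Set.ncard {x : Fin n → ZMod q |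
    (∀ i, Avoids (x i) u v ∧ Avoids (2 * x i) u v) ∧
    ∀ i j : Fin n, i < j → Avoids (x i - x j) u v ∧ Avoids (x i + x j) u v}

/-- Count for the type `D` deformation: `x_i - x_j` and `x_i + x_j`
avoid `[u, v]`. -/
noncomputable def N_D (n q : ℕ) (u v : ℤ) : ℕ :=
  Set.ncard {x : Fin n → ZMod q |
    ∀ i j : Fin n, i < j → Avoids (x i - x j) u v ∧ Avoids (x i + x j) u v}

/-- `1 + y + y^2 + ... + y^(m-1)`. -/
noncomputable def phi (m : ℕ) : ℚ[X] := ∑ i ∈ Finset.range m, X ^ i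

/-- `1 + y^2 + y^4 + ... + y^(2(m-1))`. -/
noncomputable def phi2 (m : ℕ) : ℚ[X] := ∑ i ∈ Finset.range m, X ^ (2 * i)

/-- For `g = ∑_k g_k y^k`, the sum `∑_k g_k (q - k)^n`. -/
noncomputable def polysum (g : ℚ[X]) (q n : ℕ) : ℚ :=
  ∑ k ∈ Finset.range (g.natDegree + 1), g.coeff k * ((q : ℚ) - (k : ℚ)) ^ n

/-!
Since `q` is odd, a point `x` is encoded by writing `2 * x i = s i * P i` with signs `s i` and
integers `0 < P i < q` of one prescribed parity. Avoiding `[0, a]` then means that the `P i` keep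
certain minimal distances from each other and from walls at `0` and `q`, enlarged exactly where
suitable labels of the points descend from left to right.

Sorting the points and recording the gaps, the series counting such placements over all `q` is
`X ^ (2 * n) * (∑ σ, X ^ (a * des σ)) / ((1 - X) ^ 2 * (1 - X ^ 2) ^ (n - 1))`. The sum depends
on `a` only through the dilation `X ↦ X ^ a`, and in the unit case the constraints are so weak that
the placements, summed over all signs, number `2 * q ^ n`. This gives `a ^ n * N_C` as the value at
`q` of `g(S) (z ^ n * [a ∣ z])`, where `S` is the backward shift and
`g = X ^ (2 * n) * phi2 a ^ (n - 1) * phi a ^ 2`.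

If `f(S)` kills `c`, then `f(S) ^ (n + 1)` kills `z ^ n * c z`. For odd `a`, `phi a ^ (n + 1)`
divides `g`, and `phi a` applied to `S` kills `a * [a ∣ z] - 1`, so the indicator `[a ∣ z]` can be
replaced by `1 / a`. For even `a` only the odd part of `g` contributes at an odd `q`, and the same
averaging is carried out among the even integers.
-/

lemma one_sub_X_mul_phi (a : ℕ) : (1 - X) * phi a = 1 - X ^ a :=
  mul_neg_geom_sum X a

lemma phi2_eq_expand (a : ℕ) : phi2 a = expand ℚ 2 (phi a) := by
  simp [phi, phi2, pow_mul]

lemma one_sub_X_sq_mul_phi2 (a : ℕ) : (1 - X ^ 2) * phi2 a = 1 - (X ^ 2) ^ a := by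
  simpa [phi2_eq_expand] using congrArg (expand ℚ 2) (one_sub_X_mul_phi a)

section Increments

variable {n : ℕ}

/-- The sequences `0 = y_0, y_1, …, y_n = Q` whose `i`-th increment lies in `A i`. -/
def pathsWithIncrements (A : Fin n → Set ℕ) (Q : ℕ) : Set (Fin (n + 1) → ℕ) :=
  {y | y 0 = 0 ∧ y (Fin.last n) = Q ∧ ∀ i, ∃ d ∈ A i, y i.succ = y i.castSucc + d}

lemma pathsWithIncrements_eq_image_partialSum (A : Fin n → Set ℕ) (Q : ℕ) :
    pathsWithIncrements A Q =
      Fin.partialSum '' {d : Fin n → ℕ | (∀ i, d i ∈ A i) ∧ ∑ i, d i = Q} := by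
  have partialSum_last (d : Fin n → ℕ) : Fin.partialSum d (Fin.last n) = ∑ i, d i := by
    rw [Fin.partialSum, List.take_of_length_le (by simp), List.sum_ofFn]
  ext y
  constructor
  · rintro ⟨hzero, hlast, hstep⟩
    choose d hdA hd using hstep
    have hy : Fin.partialSum d = y := by
      ext i
      induction i using Fin.induction with
      | zero => rw [Fin.partialSum_zero, hzero]
      | succ i ih => rw [Fin.partialSum_succ, ih, hd]
    exact ⟨d, ⟨hdA, by rw [← partialSum_last, hy, hlast]⟩, hy⟩
  · rintro ⟨d, ⟨hdA, hsum⟩, rfl⟩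
    exact ⟨Fin.partialSum_zero d, by rw [partialSum_last, hsum],
      fun i => ⟨d i, hdA i, Fin.partialSum_succ d i⟩⟩

lemma partialSum_injective : Function.Injective (Fin.partialSum : (Fin n → ℕ) → _) := by
  intro d e h
  ext i
  have hi := congrFun h i.succ
  rwa [Fin.partialSum_succ, Fin.partialSum_succ, h, Nat.add_left_cancel_iff] at hi

lemma coeff_prod_mk_indicator (R : Type*) [CommSemiring R] (A : Fin n → Set ℕ) (Q : ℕ) :
    PowerSeries.coeff Q (∏ i, PowerSeries.mk ((A i).indicator (1 : ℕ → R))) =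
      (pathsWithIncrements A Q).ncard := by
  classical
  have hfilter : (((Finset.univ.finsuppAntidiag Q).filter fun d : Fin n →₀ ℕ => ∀ i, d i ∈ A i)
      : Set (Fin n →₀ ℕ)).image DFunLike.coe =
      {d : Fin n → ℕ | (∀ i, d i ∈ A i) ∧ ∑ i, d i = Q} := by
    ext d
    constructor
    · rintro ⟨d, hd, rfl⟩
      simpa [and_comm] using hd
    · intro hd
      exact ⟨Finsupp.equivFunOnFinite.symm d, by simpa [and_comm] using hd, rfl⟩
  rw [pathsWithIncrements_eq_image_partialSum, Set.ncard_image_of_injective _ partialSum_injective,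
    ← hfilter, Set.ncard_image_of_injective _ DFunLike.coe_injective, Set.ncard_coe_finset,
    PowerSeries.coeff_prod]
  simp [Set.indicator_apply, Finset.prod_ite_zero]

lemma pathsWithIncrements_cons_snoc (A : Set ℕ) (B : Fin n → Set ℕ) (C : Set ℕ) (Q : ℕ) :
    pathsWithIncrements (Fin.cons A (Fin.snoc B C) : Fin (n + 2) → Set ℕ) Q =
      (fun p : Fin (n + 1) → ℕ => (Fin.cons 0 (Fin.snoc p Q : Fin (n + 2) → ℕ))) ''
        {p | p 0 ∈ A ∧ (∀ t, ∃ d ∈ B t, p t.succ = p t.castSucc + d) ∧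
          ∃ d ∈ C, Q = p (Fin.last n) + d} := by
  have cons_snoc_mem_iff (p : Fin (n + 1) → ℕ) (Q' : ℕ) :
      Fin.cons 0 (Fin.snoc p Q' : Fin (n + 2) → ℕ) ∈
          pathsWithIncrements (Fin.cons A (Fin.snoc B C) : Fin (n + 2) → Set ℕ) Q ↔
        Q' = Q ∧ p 0 ∈ A ∧ (∀ t, ∃ d ∈ B t, p t.succ = p t.castSucc + d) ∧
          ∃ d ∈ C, Q' = p (Fin.last n) + d := by
    have hlast : (Fin.cons 0 (Fin.snoc p Q' : Fin (n + 2) → ℕ) : Fin (n + 3) → ℕ)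
        (Fin.last (n + 2)) = Q' := by
      rw [← Fin.succ_last, Fin.cons_succ, Fin.snoc_last]
    have hpenultimate : (Fin.cons 0 (Fin.snoc p Q' : Fin (n + 2) → ℕ) : Fin (n + 3) → ℕ)
        (Fin.last (n + 1)).castSucc = p (Fin.last n) := by
      rw [← Fin.succ_last, ← Fin.succ_castSucc, Fin.cons_succ, Fin.snoc_castSucc]
    have hmid (t : Fin n) : (Fin.snoc p Q' : Fin (n + 2) → ℕ) t.castSucc.succ = p t.succ := by
      rw [Fin.succ_castSucc, Fin.snoc_castSucc]
    rw [pathsWithIncrements, Set.mem_ofPred_eq, hlast, Fin.forall_fin_succ, Fin.forall_fin_succ']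
    simp [hmid, hpenultimate]
  ext y
  constructor
  · intro hy
    cases y using Fin.consCases with | _ y₀ y =>
    cases y using Fin.snocCases with | _ p Q' =>
    obtain rfl : y₀ = 0 := hy.1
    obtain ⟨rfl, hp⟩ := (cons_snoc_mem_iff p Q').mp hy
    exact ⟨p, hp, rfl⟩
  · rintro ⟨p, hp, rfl⟩
    exact (cons_snoc_mem_iff p Q).mpr ⟨rfl, hp⟩

end Increments

/-- The natural numbers `β, β + d, β + 2 * d, …`. -/
def progression (d β : ℕ) : Set ℕ :=
  {k | β ≤ k ∧ d ∣ k - β}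

lemma one_sub_X_pow_mul_mk_indicator_progression (R : Type*) [CommRing R] {d : ℕ} (hd : d ≠ 0)
    (β : ℕ) :
    (1 - PowerSeries.X ^ d) *
      PowerSeries.mk ((progression d β).indicator (1 : ℕ → R)) = PowerSeries.X ^ β := by
  classical
  have hgeom : (1 - PowerSeries.X ^ d) *
      PowerSeries.expand d hd (PowerSeries.mk (1 : ℕ → R)) = 1 := by
    simpa [mul_comm] using
      congrArg (PowerSeries.expand d hd) (PowerSeries.mk_one_mul_one_sub_eq_one R)
  have hmk : PowerSeries.mk ((progression d β).indicator (1 : ℕ → R)) =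
      PowerSeries.X ^ β * PowerSeries.expand d hd (PowerSeries.mk 1) := by
    ext k
    simp [progression, PowerSeries.coeff_X_pow_mul', PowerSeries.coeff_expand,
      Set.indicator_apply, ite_and]
  rw [hmk, mul_left_comm, hgeom, mul_one]

lemma ncard_setOf_snd_mem {ι γ : Type*} [Fintype ι] {T : ι → Set γ} (hT : ∀ i, (T i).Finite) :
    {x : ι × γ | x.2 ∈ T x.1}.ncard = ∑ i, (T i).ncard := by
  have (i : ι) : Finite {c // c ∈ T i} := hT i
  calc {x : ι × γ | x.2 ∈ T x.1}.ncard = Nat.card (Σ i, {c // c ∈ T i}) :=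
        Nat.card_congr (Equiv.subtypeProdEquivSigmaSubtype fun i c => c ∈ T i)
    _ = ∑ i, (T i).ncard := Nat.card_sigma

section Placements

variable {α : Type*} [LinearOrder α] {m n : ℕ}

/-- The indicator of a descent from `x` to `y`, as a natural number so that it can weight gaps. -/
def descentBit (x y : α) : ℕ :=
  if y < x then 1 else 0

lemma descentBit_triangle (x y z : α) : descentBit x z ≤ descentBit x y + descentBit y z := by
  rcases le_or_gt z y with hzy | hzy
  · by_cases hyx : y < x
    · simp only [descentBit, if_pos hyx]
      split_ifs <;> omega
    · rcases hzy.lt_or_eq with hlt | rfl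
      · simp only [descentBit, if_pos hlt]
        split_ifs <;> omega
      · exact Nat.le_add_right _ _
  · by_cases hzx : z < x
    · simp only [descentBit, if_pos hzx, if_pos (hzy.trans hzx)]
      omega
    · simp [descentBit, hzx]

lemma strictMono_toLex_comp_perm_iff {ℓ : Fin n → α} (hℓ : Function.Injective ℓ)
    (P : Fin n → ℕ) (σ : Equiv.Perm (Fin n)) :
    StrictMono (fun t => toLex (P (σ t), ℓ (σ t))) ↔
      σ = Tuple.sort fun i => toLex (P i, ℓ i) := by
  have hinj : Function.Injective fun i => toLex (P i, ℓ i) :=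
    fun i j hij => hℓ (Prod.ext_iff.mp (toLex.injective hij)).2
  rw [Tuple.eq_sort_iff]
  exact ⟨fun h => ⟨h.monotone, fun i j hij heq => absurd (h.injective heq) hij.ne⟩,
    fun h => h.1.strictMono_of_injective (hinj.comp σ.injective)⟩

variable [Zero α]

/-- The placements of points with labels `ℓ i` at integer positions `P i` of equal parity between
two walls at `0` and `Q`, where the walls carry the label `0`. A wall and a point are at least `b`
apart and two points at least `2 * b`; an extra `a`, respectively `2 * a`, is required when the
labels descend from left to right. -/
def placements (ℓ : Fin n → α) (b a Q : ℕ) : Set (Fin n → ℕ) :=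
  {P | (∀ i j, P i % 2 = P j % 2) ∧
    (∀ i, b + a * descentBit 0 (ℓ i) ≤ P i ∧ P i + (b + a * descentBit (ℓ i) 0) ≤ Q) ∧
    ∀ i j, i ≠ j → P i + 2 * (b + a * descentBit (ℓ i) (ℓ j)) ≤ P j ∨
      P j + 2 * (b + a * descentBit (ℓ j) (ℓ i)) ≤ P i}

/-- The placements whose points appear from left to right in the order of their indices; only
neighbours have to be compared. -/
def sortedPlacements (ℓ : Fin (m + 1) → α) (b a Q : ℕ) : Set (Fin (m + 1) → ℕ) :=
  {p | b + a * descentBit 0 (ℓ 0) ≤ p 0 ∧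
    (∀ t : Fin m, p t.castSucc + 2 * (b + a * descentBit (ℓ t.castSucc) (ℓ t.succ)) ≤ p t.succ ∧
      p t.castSucc % 2 = p t.succ % 2) ∧
    p (Fin.last m) + (b + a * descentBit (ℓ (Fin.last m)) 0) ≤ Q}

lemma le_of_mem_sortedPlacements {ℓ : Fin (m + 1) → α} {b a Q : ℕ} {p : Fin (m + 1) → ℕ}
    (hp : p ∈ sortedPlacements ℓ b a Q) {s t : Fin (m + 1)} (hst : s < t) :
    p s + 2 * (b + a * descentBit (ℓ s) (ℓ t)) ≤ p t ∧ p s % 2 = p t % 2 := by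
  induction t using Fin.induction with
  | zero => exact absurd hst (Fin.not_lt_zero s)
  | succ t ih =>
    obtain ⟨hgap, hparity⟩ := hp.2.1 t
    rcases (Fin.le_castSucc_iff.mpr hst).eq_or_lt with rfl | hlt
    · exact ⟨hgap, hparity⟩
    · obtain ⟨ihgap, ihparity⟩ := ih hlt
      have htriangle :=
        Nat.mul_le_mul_left a (descentBit_triangle (ℓ s) (ℓ t.castSucc) (ℓ t.succ))
      rw [mul_add] at htriangle
      omega

lemma sortedPlacements_subset_placements (ℓ : Fin (m + 1) → α) (b a Q : ℕ) :
    sortedPlacements ℓ b a Q ⊆ placements ℓ b a Q := by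
  intro p hp
  refine ⟨fun i j => ?_, fun i => ⟨?_, ?_⟩, fun i j hij => ?_⟩
  · rcases lt_trichotomy i j with hij | rfl | hji
    · exact (le_of_mem_sortedPlacements hp hij).2
    · rfl
    · exact (le_of_mem_sortedPlacements hp hji).2.symm
  · rcases (Fin.zero_le i).eq_or_lt with rfl | hi
    · exact hp.1
    · have hgap := (le_of_mem_sortedPlacements hp hi).1
      have hwall := hp.1
      have htriangle := Nat.mul_le_mul_left a (descentBit_triangle 0 (ℓ 0) (ℓ i))
      rw [mul_add] at htriangle
      omega
  · rcases (Fin.le_last i).eq_or_lt with rfl | hi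
    · exact hp.2.2
    · have hgap := (le_of_mem_sortedPlacements hp hi).1
      have hwall := hp.2.2
      have htriangle := Nat.mul_le_mul_left a (descentBit_triangle (ℓ i) (ℓ (Fin.last m)) 0)
      rw [mul_add] at htriangle
      omega
  · rcases lt_or_gt_of_ne hij with hlt | hgt
    · exact Or.inl (le_of_mem_sortedPlacements hp hlt).1
    · exact Or.inr (le_of_mem_sortedPlacements hp hgt).1

lemma mem_sortedPlacements_iff {ℓ : Fin (m + 1) → α} (hℓ : Function.Injective ℓ) {a : ℕ}
    (ha : a ≠ 0) {b Q : ℕ} {p : Fin (m + 1) → ℕ} :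
    p ∈ sortedPlacements ℓ b a Q ↔
      p ∈ placements ℓ b a Q ∧ StrictMono fun t => toLex (p t, ℓ t) := by
  constructor
  · refine fun hp => ⟨sortedPlacements_subset_placements ℓ b a Q hp, fun s t hst => ?_⟩
    have hgap := (le_of_mem_sortedPlacements hp hst).1
    rw [Prod.Lex.toLex_lt_toLex]
    rcases (hℓ.ne hst.ne).lt_or_gt with hlt | hgt
    · dsimp only
      exact (Nat.lt_or_eq_of_le (by omega)).imp_right fun heq => ⟨heq, hlt⟩
    · rw [descentBit, if_pos hgt] at hgap
      left
      dsimp only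
      omega
  · rintro ⟨⟨hparity, hwall, hgap⟩, hmono⟩
    refine ⟨(hwall 0).1, fun t => ⟨?_, hparity _ _⟩, (hwall _).2⟩
    refine (hgap t.castSucc t.succ t.castSucc_lt_succ.ne).resolve_right fun hle => ?_
    rcases Prod.Lex.toLex_lt_toLex.mp (hmono t.castSucc_lt_succ) with hlt | ⟨heq, hlt⟩
    · dsimp only at hlt
      omega
    · dsimp only at heq hlt
      rw [descentBit, if_pos hlt] at hle
      omega

lemma finite_placements (ℓ : Fin n → α) (b a Q : ℕ) : (placements ℓ b a Q).Finite :=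
  (Set.finite_Iic fun _ => Q).subset fun _ hP i => le_of_add_le_left (hP.2.1 i).2

lemma comp_mem_placements {ℓ : Fin n → α} {b a Q : ℕ} {P : Fin n → ℕ}
    (hP : P ∈ placements ℓ b a Q) (σ : Equiv.Perm (Fin n)) :
    P ∘ σ ∈ placements (ℓ ∘ σ) b a Q :=
  ⟨fun i j => hP.1 (σ i) (σ j), fun i => hP.2.1 (σ i),
    fun i j hij => hP.2.2 (σ i) (σ j) (σ.injective.ne hij)⟩

/-- Ties between equal positions are broken by the labels, so exactly one permutation sorts a
given placement. -/
lemma ncard_placements_eq_sum_sortedPlacements {ℓ : Fin (m + 1) → α} (hℓ : Function.Injective ℓ)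
    {a : ℕ} (ha : a ≠ 0) (b Q : ℕ) :
    (placements ℓ b a Q).ncard =
      ∑ σ : Equiv.Perm (Fin (m + 1)), (sortedPlacements (ℓ ∘ σ) b a Q).ncard := by
  have hsorted (σ : Equiv.Perm (Fin (m + 1))) (P : Fin (m + 1) → ℕ) :
      P ∘ σ ∈ sortedPlacements (ℓ ∘ σ) b a Q ↔
        P ∈ placements ℓ b a Q ∧ σ = Tuple.sort fun i => toLex (P i, ℓ i) := by
    rw [mem_sortedPlacements_iff (hℓ.comp σ.injective) ha, ← strictMono_toLex_comp_perm_iff hℓ]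
    refine and_congr_left fun _ => ⟨fun h => ?_, fun h => comp_mem_placements h σ⟩
    simpa [Function.comp_assoc] using comp_mem_placements h σ.symm
  have hfinite (σ : Equiv.Perm (Fin (m + 1))) : (sortedPlacements (ℓ ∘ σ) b a Q).Finite :=
    (finite_placements _ b a Q).subset (sortedPlacements_subset_placements _ b a Q)
  have hbij : Set.BijOn (fun x : Equiv.Perm (Fin (m + 1)) × (Fin (m + 1) → ℕ) => x.2 ∘ x.1.symm)
      {x | x.2 ∈ sortedPlacements (ℓ ∘ x.1) b a Q} (placements ℓ b a Q) := by
    have hmem {x : Equiv.Perm (Fin (m + 1)) × (Fin (m + 1) → ℕ)}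
        (hx : x.2 ∈ sortedPlacements (ℓ ∘ x.1) b a Q) :=
      (hsorted x.1 (x.2 ∘ x.1.symm)).mp (by simpa [Function.comp_assoc] using hx)
    refine ⟨fun x hx => (hmem hx).1, fun x hx y hy hxy => ?_, fun P hP => ?_⟩
    · dsimp only at hxy
      have hperm : x.1 = y.1 := by rw [(hmem hx).2, (hmem hy).2, hxy]
      rw [hperm] at hxy
      exact Prod.ext hperm (y.1.symm.surjective.injective_comp_right hxy)
    · refine ⟨(_, P ∘ _), (hsorted _ P).mpr ⟨hP, rfl⟩, ?_⟩
      exact funext fun i => congrArg P (Equiv.apply_symm_apply _ i)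
  rw [← hbij.ncard_eq, ncard_setOf_snd_mem hfinite]

/-- The descents met when walking from the left wall through all points to the right wall, the
steps between two points counting twice. -/
def affineDescents (ℓ : Fin (m + 1) → α) : ℕ :=
  descentBit 0 (ℓ 0) + 2 * ∑ t : Fin m, descentBit (ℓ t.castSucc) (ℓ t.succ) +
    descentBit (ℓ (Fin.last m)) 0

lemma ncard_sortedPlacements (ℓ : Fin (m + 1) → α) (b a Q : ℕ) :
    (sortedPlacements ℓ b a Q).ncard =
      (pathsWithIncrements
        (Fin.cons (progression 1 (b + a * descentBit 0 (ℓ 0)))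
          (Fin.snoc
            (fun t => progression 2 (2 * (b + a * descentBit (ℓ t.castSucc) (ℓ t.succ))))
            (progression 1 (b + a * descentBit (ℓ (Fin.last m)) 0))) : Fin (m + 2) → Set ℕ)
        Q).ncard := by
  have le_and_parity_iff (x y β : ℕ) :
      x + 2 * β ≤ y ∧ x % 2 = y % 2 ↔ ∃ d ∈ progression 2 (2 * β), y = x + d := by
    refine ⟨fun h => ⟨y - x, ⟨by omega, by omega⟩, by omega⟩, ?_⟩
    rintro ⟨d, ⟨hle, hdvd⟩, rfl⟩
    omega
  have le_iff (x y β : ℕ) : x + β ≤ y ↔ ∃ d ∈ progression 1 β, y = x + d :=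
    ⟨fun h => ⟨y - x, ⟨by omega, one_dvd _⟩, by omega⟩,
      fun ⟨_, hd, hy⟩ => hy ▸ Nat.add_le_add_left hd.1 x⟩
  have hinjective : Function.Injective fun p : Fin (m + 1) → ℕ =>
      (Fin.cons 0 (Fin.snoc p Q : Fin (m + 2) → ℕ) : Fin (m + 3) → ℕ) :=
    (Fin.cons_right_injective (α := fun _ => ℕ) 0).comp
      (Fin.snoc_left_injective (α := fun _ => ℕ) Q)
  rw [pathsWithIncrements_cons_snoc, Set.ncard_image_of_injective _ hinjective]
  congr 1 with p
  exact and_congr (by simp [progression])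
    (and_congr (forall_congr' fun _ => le_and_parity_iff _ _ _) (le_iff _ _ _))

lemma mk_ncard_sortedPlacements (R : Type*) [CommRing R] (ℓ : Fin (m + 1) → α) (b a : ℕ) :
    (1 - PowerSeries.X) ^ 2 * (1 - PowerSeries.X ^ 2) ^ m *
        PowerSeries.mk (fun Q => ((sortedPlacements ℓ b a Q).ncard : R)) =
      PowerSeries.X ^ (2 * b * (m + 1) + a * affineDescents ℓ) := by
  have hprod : PowerSeries.mk (fun Q => ((sortedPlacements ℓ b a Q).ncard : R)) =
      PowerSeries.mk ((progression 1 (b + a * descentBit 0 (ℓ 0))).indicator 1) *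
        ((∏ t : Fin m, PowerSeries.mk
          ((progression 2 (2 * (b + a * descentBit (ℓ t.castSucc) (ℓ t.succ)))).indicator 1)) *
        PowerSeries.mk ((progression 1 (b + a * descentBit (ℓ (Fin.last m)) 0)).indicator 1)) := by
    ext Q
    rw [PowerSeries.coeff_mk, ncard_sortedPlacements, ← coeff_prod_mk_indicator,
      Fin.prod_univ_succ, Fin.prod_univ_castSucc]
    simp only [Fin.cons_zero, Fin.cons_succ, Fin.snoc_castSucc, Fin.snoc_last]
  have hwall (β : ℕ) := one_sub_X_pow_mul_mk_indicator_progression R one_ne_zero β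
  have hmid : (1 - PowerSeries.X ^ 2) ^ m * (∏ t : Fin m, PowerSeries.mk
      ((progression 2 (2 * (b + a * descentBit (ℓ t.castSucc) (ℓ t.succ)))).indicator
        (1 : ℕ → R))) =
      PowerSeries.X ^ ∑ t : Fin m, 2 * (b + a * descentBit (ℓ t.castSucc) (ℓ t.succ)) := by
    rw [← Fin.prod_const, ← Finset.prod_mul_distrib, ← Finset.prod_pow_eq_pow_sum]
    simp only [one_sub_X_pow_mul_mk_indicator_progression R two_ne_zero]
  simp only [pow_one] at hwall
  rw [hprod]
  calc _ = ((1 - PowerSeries.X) * PowerSeries.mk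
            ((progression 1 (b + a * descentBit 0 (ℓ 0))).indicator (1 : ℕ → R))) *
          ((1 - PowerSeries.X ^ 2) ^ m * ∏ t : Fin m, PowerSeries.mk
            ((progression 2 (2 * (b + a * descentBit (ℓ t.castSucc) (ℓ t.succ)))).indicator 1)) *
          ((1 - PowerSeries.X) * PowerSeries.mk
            ((progression 1 (b + a * descentBit (ℓ (Fin.last m)) 0)).indicator 1)) := by ring
    _ = _ := by
      rw [hwall, hmid, hwall, ← pow_add, ← pow_add, affineDescents, ← Finset.mul_sum,
        Finset.sum_add_distrib, ← Finset.mul_sum]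
      congr 1
      simp only [Finset.sum_const, Finset.card_univ, Fintype.card_fin, smul_eq_mul]
      ring

lemma mk_ncard_placements (R : Type*) [CommRing R] {ℓ : Fin (m + 1) → α}
    (hℓ : Function.Injective ℓ) {a : ℕ} (ha : a ≠ 0) (b : ℕ) :
    (1 - PowerSeries.X) ^ 2 * (1 - PowerSeries.X ^ 2) ^ m *
        PowerSeries.mk (fun Q => ((placements ℓ b a Q).ncard : R)) =
      ∑ σ : Equiv.Perm (Fin (m + 1)),
        PowerSeries.X ^ (2 * b * (m + 1) + a * affineDescents (ℓ ∘ σ)) := by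
  simp only [← mk_ncard_sortedPlacements, ← Finset.mul_sum]
  congr 1
  ext Q
  simp [ncard_placements_eq_sum_sortedPlacements hℓ ha]

/-- The labels enter only through the exponents `a * affineDescents`, and these are the
`a`-dilates of the exponents for unit gaps. -/
lemma mk_ncard_placements_eq_expand {ℓ : Fin (m + 1) → α} (hℓ : Function.Injective ℓ) {a : ℕ}
    (ha : a ≠ 0) (b : ℕ) :
    PowerSeries.mk (fun Q => ((placements ℓ b a Q).ncard : ℚ)) =
      PowerSeries.X ^ (2 * b * (m + 1)) * (phi2 a : PowerSeries ℚ) ^ m *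
        (phi a : PowerSeries ℚ) ^ 2 *
        PowerSeries.expand a ha (PowerSeries.mk fun Q => ((placements ℓ 0 1 Q).ncard : ℚ)) := by
  have hphi : (1 - PowerSeries.X) * (phi a : PowerSeries ℚ) = 1 - PowerSeries.X ^ a := by
    simpa using congrArg ((↑) : ℚ[X] → PowerSeries ℚ) (one_sub_X_mul_phi a)
  have hphi2 : (1 - PowerSeries.X ^ 2) * (phi2 a : PowerSeries ℚ) =
      1 - (PowerSeries.X ^ a) ^ 2 := by
    simpa [pow_right_comm] using congrArg ((↑) : ℚ[X] → PowerSeries ℚ) (one_sub_X_sq_mul_phi2 a)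
  have hunit := congrArg (PowerSeries.expand a ha) (mk_ncard_placements ℚ hℓ one_ne_zero 0)
  simp only [map_mul, map_pow, map_sub, map_one, PowerSeries.expand_X, map_sum] at hunit
  have hdenom : ((1 - PowerSeries.X) ^ 2 * (1 - PowerSeries.X ^ 2) ^ m : PowerSeries ℚ) ≠ 0 := by
    intro h
    simpa using congrArg PowerSeries.constantCoeff h
  refine mul_left_cancel₀ hdenom ?_
  calc _ = PowerSeries.X ^ (2 * b * (m + 1)) * ∑ σ : Equiv.Perm (Fin (m + 1)),
          (PowerSeries.X ^ a) ^ affineDescents (ℓ ∘ σ) := by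
        simp only [mk_ncard_placements ℚ hℓ ha, pow_add, pow_mul,
          Finset.mul_sum]
    _ = PowerSeries.X ^ (2 * b * (m + 1)) *
          ((1 - PowerSeries.X ^ a) ^ 2 * (1 - (PowerSeries.X ^ a) ^ 2) ^ m *
            PowerSeries.expand a ha
              (PowerSeries.mk fun Q => ((placements ℓ 0 1 Q).ncard : ℚ))) := by
        simp only [hunit, mul_zero, zero_mul, zero_add, one_mul]
    _ = _ := by
        rw [← hphi, ← hphi2, mul_pow, mul_pow]
        ring

/-- The placements all of whose positions are congruent to `e` modulo `2`. -/
def placementsOfParity (ℓ : Fin n → α) (b a Q e : ℕ) : Set (Fin n → ℕ) :=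
  {P ∈ placements ℓ b a Q | ∀ i, P i % 2 = e}

lemma ncard_placements_eq_sum_placementsOfParity (ℓ : Fin (m + 1) → α) (b a Q : ℕ) :
    (placements ℓ b a Q).ncard = ∑ e ∈ Finset.range 2, (placementsOfParity ℓ b a Q e).ncard := by
  have hunion : placements ℓ b a Q =
      placementsOfParity ℓ b a Q 0 ∪ placementsOfParity ℓ b a Q 1 := by
    ext P
    constructor
    · intro hP
      rcases Nat.mod_two_eq_zero_or_one (P 0) with h0 | h0
      · exact Or.inl ⟨hP, fun i => (hP.1 i 0).trans h0⟩
      · exact Or.inr ⟨hP, fun i => (hP.1 i 0).trans h0⟩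
    · rintro (hP | hP) <;> exact hP.1
  have hdisjoint : Disjoint (placementsOfParity ℓ b a Q 0) (placementsOfParity ℓ b a Q 1) :=
    Set.disjoint_left.mpr fun P h0 h1 => zero_ne_one ((h0.2 0).symm.trans (h1.2 0))
  have hfinite (e : ℕ) : (placementsOfParity ℓ b a Q e).Finite :=
    (finite_placements ℓ b a Q).subset fun P hP => hP.1
  rw [hunion, Set.ncard_union_eq hdisjoint (hfinite 0) (hfinite 1), Finset.sum_range_succ,
    Finset.sum_range_one]

end Placements

section SignedLabels

variable {n : ℕ}

/-- The labels `±(n - i)`, negative where `s i = 1`. Their absolute values decrease with `i`, so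
that the order of two labels is decided by the sign of the one with the smaller index. -/
def signedLabel (s : Fin n → ℤˣ) (i : Fin n) : ℤ :=
  s i * (i - n)

lemma signedLabel_injective (s : Fin n → ℤˣ) : Function.Injective (signedLabel s) := by
  intro i j hij
  have habs := congrArg Int.natAbs hij
  simp only [signedLabel, Int.natAbs_mul, Int.units_natAbs, one_mul] at habs
  omega

lemma signedLabel_neg_iff {s : Fin n → ℤˣ} {i : Fin n} : signedLabel s i < 0 ↔ s i = 1 := by
  rcases Int.units_eq_one_or (s i) with hi | hi <;> simp [signedLabel, hi]

lemma signedLabel_pos_iff {s : Fin n → ℤˣ} {i : Fin n} : 0 < signedLabel s i ↔ s i ≠ 1 := by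
  rcases Int.units_eq_one_or (s i) with hi | hi <;> simp [signedLabel, hi]

lemma signedLabel_lt_signedLabel_iff {s : Fin n → ℤˣ} {i j : Fin n} (hij : i < j) :
    signedLabel s i < signedLabel s j ↔ s i = 1 := by
  rcases Int.units_eq_one_or (s i) with hi | hi <;>
    rcases Int.units_eq_one_or (s j) with hj | hj <;>
    simp [signedLabel, hi, hj] <;> omega

lemma signedLabel_gt_signedLabel_iff {s : Fin n → ℤˣ} {i j : Fin n} (hij : i < j) :
    signedLabel s j < signedLabel s i ↔ s i ≠ 1 := by
  rw [← not_iff_not, not_lt, (signedLabel_injective s |>.ne hij.ne).le_iff_lt,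
    signedLabel_lt_signedLabel_iff hij, not_not]

lemma mem_placementsOfParity_signedLabel_iff {s : Fin n → ℤˣ} {b a Q e : ℕ} {P : Fin n → ℕ} :
    P ∈ placementsOfParity (signedLabel s) b a Q e ↔
      (∀ i, P i % 2 = e ∧
        if s i = 1 then b + a ≤ P i ∧ P i + b ≤ Q else b ≤ P i ∧ P i + (b + a) ≤ Q) ∧
      ∀ i j, i < j →
        if s i = 1 then P i + 2 * b ≤ P j ∨ P j + 2 * (b + a) ≤ P i
        else P i + 2 * (b + a) ≤ P j ∨ P j + 2 * b ≤ P i := by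
  have hwall (i : Fin n) :
      (b + a * descentBit 0 (signedLabel s i) ≤ P i ∧
        P i + (b + a * descentBit (signedLabel s i) 0) ≤ Q) ↔
      if s i = 1 then b + a ≤ P i ∧ P i + b ≤ Q else b ≤ P i ∧ P i + (b + a) ≤ Q := by
    simp only [descentBit, signedLabel_neg_iff, signedLabel_pos_iff]
    split_ifs <;> simp_all
  have hgap {i j : Fin n} (hij : i < j) :
      (P i + 2 * (b + a * descentBit (signedLabel s i) (signedLabel s j)) ≤ P j ∨
        P j + 2 * (b + a * descentBit (signedLabel s j) (signedLabel s i)) ≤ P i) ↔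
      if s i = 1 then P i + 2 * b ≤ P j ∨ P j + 2 * (b + a) ≤ P i
        else P i + 2 * (b + a) ≤ P j ∨ P j + 2 * b ≤ P i := by
    simp only [descentBit, signedLabel_lt_signedLabel_iff hij, signedLabel_gt_signedLabel_iff hij]
    split_ifs <;> simp_all
  constructor
  · rintro ⟨⟨-, hwalls, hgaps⟩, hparity⟩
    exact ⟨fun i => ⟨hparity i, (hwall i).mp (hwalls i)⟩,
      fun i j hij => (hgap hij).mp (hgaps i j hij.ne)⟩
  · rintro ⟨hpoint, hgaps⟩
    refine ⟨⟨fun i j => (hpoint i).1.trans (hpoint j).1.symm,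
      fun i => (hwall i).mpr (hpoint i).2, fun i j hij => ?_⟩, fun i => (hpoint i).1⟩
    rcases lt_or_gt_of_ne hij with hlt | hgt
    · exact (hgap hlt).mpr (hgaps i j hlt)
    · exact ((hgap hgt).mpr (hgaps j i hgt)).symm

lemma card_filter_mod_two_add_card_filter_mod_two (M : ℕ) {e : ℕ} (he : e < 2) :
    ((Finset.Ico 1 (M + 1)).filter (· % 2 = e)).card + ((Finset.range M).filter (· % 2 = e)).card =
      M := by
  rw [Finset.card_filter, Finset.card_filter, Finset.sum_Ico_eq_sum_range, Nat.add_sub_cancel,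
    ← Finset.sum_add_distrib]
  calc _ = ∑ _k ∈ Finset.range M, 1 :=
        Finset.sum_congr rfl fun k _ => by split_ifs <;> omega
    _ = M := by simp

lemma sum_ncard_unit_placementsOfParity_signedLabel (M : ℕ) {e : ℕ} (he : e < 2) :
    ∑ s : Fin n → ℤˣ, (placementsOfParity (signedLabel s) 0 1 M e).ncard = M ^ n := by
  let positions (u : ℤˣ) : Finset ℕ :=
    (if u = 1 then Finset.Ico 1 (M + 1) else Finset.range M).filter (· % 2 = e)
  have hpositions (u : ℤˣ) (k : ℕ) :
      k ∈ positions u ↔ k % 2 = e ∧ if u = 1 then 1 ≤ k ∧ k ≤ M else k < M := by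
    simp only [positions, Finset.mem_filter]
    split_ifs <;> simp [and_comm]
  have hplacements (s : Fin n → ℤˣ) : placementsOfParity (signedLabel s) 0 1 M e =
      Fintype.piFinset fun i => positions (s i) := by
    ext P
    simp only [mem_placementsOfParity_signedLabel_iff, Finset.mem_coe, Fintype.mem_piFinset,
      hpositions]
    refine ⟨fun hP i => (hP.1 i).imp_right fun hi => ?_, fun hP =>
      ⟨fun i => (hP i).imp_right fun hi => ?_, fun i j _ => ?_⟩⟩
    · split_ifs at hi ⊢ <;> omega
    · split_ifs at hi ⊢ <;> omega
    · have hi := (hP i).1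
      have hj := (hP j).1
      split_ifs <;> omega
  have hcard : ∑ u : ℤˣ, (positions u).card = M := by
    rw [UnitsInt.univ, Finset.sum_pair (by decide)]
    simpa [positions] using card_filter_mod_two_add_card_filter_mod_two M he
  calc _ = ∑ s : Fin n → ℤˣ, ∏ i, (positions (s i)).card := by
        simp only [hplacements, Set.ncard_coe_finset, Fintype.card_piFinset]
    _ = (∑ u : ℤˣ, (positions u).card) ^ n := (Fintype.sum_pow (fun u => (positions u).card) n).symm
    _ = M ^ n := by rw [hcard]

lemma sum_ncard_unit_placements_signedLabel (m M : ℕ) :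
    ∑ s : Fin (m + 1) → ℤˣ, (placements (signedLabel s) 0 1 M).ncard = 2 * M ^ (m + 1) := by
  simp only [ncard_placements_eq_sum_placementsOfParity]
  rw [Finset.sum_comm, Finset.sum_congr rfl fun e he =>
    sum_ncard_unit_placementsOfParity_signedLabel M (Finset.mem_range.mp he)]
  simp

end SignedLabels

section Residues

variable {n q a e : ℕ}

lemma avoids_intCast_iff {z : ℤ} (hz : |z| < q) :
    Avoids (z : ZMod q) 0 a ↔ (z < 0 ∨ a < z) ∧ a < z + q := by
  have habs := abs_lt.mp hz
  constructor
  · intro h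
    have hz_notMem : ¬(0 ≤ z ∧ z ≤ a) := fun hz => h z hz.1 hz.2 rfl
    have hzq_notMem : ¬(0 ≤ z + q ∧ z + q ≤ a) := fun hzq => h (z + q) hzq.1 hzq.2 (by simp)
    omega
  · rintro ⟨hz', hzq⟩ k hk0 hka hzk
    rw [← sub_eq_zero, ← Int.cast_sub, ZMod.intCast_zmod_eq_zero_iff_dvd] at hzk
    have hzero := Int.eq_zero_of_abs_lt_dvd hzk (abs_lt.mpr ⟨by omega, by omega⟩)
    omega

/-- The point `x` determined by `2 * x i = s i * P i`; it is only meaningful for odd `q`, where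
`2` is a unit of `ZMod q`. -/
def signedPoint (q : ℕ) (s : Fin n → ℤˣ) (P : Fin n → ℕ) (i : Fin n) : ZMod q :=
  ((s i * P i : ℤ) : ZMod q) * 2⁻¹

lemma two_mul_inv_two (hq : Odd q) : (2 : ZMod q) * 2⁻¹ = 1 :=
  ZMod.coe_mul_inv_eq_one 2 (Nat.coprime_two_left.mpr hq)

lemma two_mul_signedPoint (hq : Odd q) (s : Fin n → ℤˣ) (P : Fin n → ℕ) (i : Fin n) :
    2 * signedPoint q s P i = ((s i * P i : ℤ) : ZMod q) := by
  rw [signedPoint, mul_left_comm, two_mul_inv_two hq, mul_one]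

lemma intCast_mul_inv_two (hq : Odd q) (w : ℤ) : ((2 * w : ℤ) : ZMod q) * 2⁻¹ = w := by
  rw [Int.cast_mul, Int.cast_ofNat, mul_right_comm, two_mul_inv_two hq, one_mul]

lemma units_mul_natCast_emod_two (u : ℤˣ) (P : ℕ) : (u * P : ℤ) % 2 = (P % 2 : ℕ) := by
  rcases Int.units_eq_one_or u with rfl | rfl
  · simp
  · simp only [Units.val_neg, Units.val_one, neg_one_mul]
    omega

lemma abs_units_mul_natCast (u : ℤˣ) (P : ℕ) : |(u * P : ℤ)| = P := by
  rw [Int.abs_eq_natAbs, Int.natAbs_mul, Int.units_natAbs, one_mul, Int.natAbs_natCast]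

lemma eq_of_units_mul_intCast_eq (hq : Odd q) {u v : ℤˣ} {P P' : ℕ} (hparity : P % 2 = P' % 2)
    (hpos : 0 < P) (hP : P < q) (hP' : P' < q)
    (h : ((u * P : ℤ) : ZMod q) = ((v * P' : ℤ) : ZMod q)) : u = v ∧ P = P' := by
  have hdvd_two : (2 : ℤ) ∣ u * P - v * P' := by
    have hu := units_mul_natCast_emod_two u P
    have hv := units_mul_natCast_emod_two v P'
    omega
  have hdvd : (2 * q : ℤ) ∣ u * P - v * P' := by
    refine IsCoprime.mul_dvd ?_ hdvd_two ?_
    · exact_mod_cast Nat.isCoprime_iff_coprime.mpr (Nat.coprime_two_left.mpr hq)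
    · rw [← ZMod.intCast_zmod_eq_zero_iff_dvd, Int.cast_sub, h, sub_self]
  have habs : |(u * P - v * P' : ℤ)| < 2 * q := by
    have hsub := abs_sub (u * P : ℤ) (v * P')
    simp only [abs_units_mul_natCast] at hsub
    omega
  have heq : (u * P : ℤ) = v * P' := sub_eq_zero.mp (Int.eq_zero_of_abs_lt_dvd hdvd habs)
  obtain rfl : P = P' := by simpa [Int.natAbs_mul] using congrArg Int.natAbs heq
  exact ⟨Units.ext (mul_right_cancel₀ (Nat.cast_ne_zero.mpr hpos.ne') heq), rfl⟩

lemma exists_units_mul_natCast_eq (hq : Odd q) (he : e < 2) {y : ZMod q} (hy : y ≠ 0) :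
    ∃ (u : ℤˣ) (P : ℕ), P % 2 = e ∧ 0 < P ∧ P < q ∧ ((u * P : ℤ) : ZMod q) = y := by
  have : NeZero q := ⟨hq.pos.ne'⟩
  have hpos : 0 < y.val := Nat.pos_of_ne_zero ((ZMod.val_ne_zero y).mpr hy)
  have hlt := y.val_lt
  by_cases hval : y.val % 2 = e
  · exact ⟨1, y.val, hval, hpos, hlt, by simp⟩
  · obtain ⟨r, hr⟩ := hq
    exact ⟨-1, q - y.val, by omega, by omega, by omega, by simp [Nat.cast_sub hlt.le]⟩

lemma avoids_two_mul_signedPoint_iff (hq : Odd q) {s : Fin n → ℤˣ} {P : Fin n → ℕ} {i : Fin n}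
    (hP : P i < q) :
    Avoids (2 * signedPoint q s P i) 0 a ↔
      if s i = 1 then 1 + a ≤ P i ∧ P i + 1 ≤ q else 1 ≤ P i ∧ P i + (1 + a) ≤ q := by
  rw [two_mul_signedPoint hq, avoids_intCast_iff (by rw [abs_units_mul_natCast]; exact_mod_cast hP)]
  rcases Int.units_eq_one_or (s i) with hi | hi
  · simp only [hi, Units.val_one, one_mul, if_true]
    omega
  · simp only [hi, Units.val_neg, Units.val_one, neg_one_mul]
    rw [if_neg (by decide)]
    omega

/-- The two differences that are not governed by the gap between `P i` and `P j` are taken care of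
by the distances to the walls. -/
lemma avoids_signedPoint_sub_add_iff (hq : Odd q) {s : Fin n → ℤˣ} {P : Fin n → ℕ} {i j : Fin n}
    (hparity : P i % 2 = P j % 2)
    (hi : if s i = 1 then 1 + a ≤ P i ∧ P i + 1 ≤ q else 1 ≤ P i ∧ P i + (1 + a) ≤ q)
    (hj : if s j = 1 then 1 + a ≤ P j ∧ P j + 1 ≤ q else 1 ≤ P j ∧ P j + (1 + a) ≤ q) :
    (Avoids (signedPoint q s P i - signedPoint q s P j) 0 a ∧
        Avoids (signedPoint q s P i + signedPoint q s P j) 0 a) ↔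
      if s i = 1 then P i + 2 * 1 ≤ P j ∨ P j + 2 * (1 + a) ≤ P i
      else P i + 2 * (1 + a) ≤ P j ∨ P j + 2 * 1 ≤ P i := by
  have hzi := units_mul_natCast_emod_two (s i) (P i)
  have hzj := units_mul_natCast_emod_two (s j) (P j)
  obtain ⟨w, hw⟩ : (2 : ℤ) ∣ s i * P i - s j * P j := by omega
  obtain ⟨w', hw'⟩ : (2 : ℤ) ∣ s i * P i + s j * P j := by omega
  have hsub : signedPoint q s P i - signedPoint q s P j = w := by
    rw [signedPoint, signedPoint, ← sub_mul, ← Int.cast_sub, hw, intCast_mul_inv_two hq]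
  have hadd : signedPoint q s P i + signedPoint q s P j = w' := by
    rw [signedPoint, signedPoint, ← add_mul, ← Int.cast_add, hw', intCast_mul_inv_two hq]
  rw [hsub, hadd]
  have hneg : (-1 : ℤˣ) ≠ 1 := by decide
  rcases Int.units_eq_one_or (s i) with hsi | hsi <;>
    rcases Int.units_eq_one_or (s j) with hsj | hsj <;>
    simp only [hsi, hsj, if_true, if_neg hneg, Units.val_neg, Units.val_one, one_mul,
      neg_one_mul] at hi hj hw hw' ⊢ <;>
    rw [avoids_intCast_iff (abs_lt.mpr ⟨by omega, by omega⟩),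
      avoids_intCast_iff (abs_lt.mpr ⟨by omega, by omega⟩)] <;>
    omega

lemma mem_placementsOfParity_iff_avoids_signedPoint (hq : Odd q) {s : Fin n → ℤˣ} {P : Fin n → ℕ} :
    P ∈ placementsOfParity (signedLabel s) 1 a q e ↔
      (∀ i, P i % 2 = e ∧ 0 < P i ∧ P i < q) ∧
      (∀ i, Avoids (2 * signedPoint q s P i) 0 a) ∧
      ∀ i j, i < j → Avoids (signedPoint q s P i - signedPoint q s P j) 0 a ∧
        Avoids (signedPoint q s P i + signedPoint q s P j) 0 a := by
  rw [mem_placementsOfParity_signedLabel_iff]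
  constructor
  · rintro ⟨hpoint, hgap⟩
    have hrange (i : Fin n) : 0 < P i ∧ P i < q := by
      have hi := (hpoint i).2
      split_ifs at hi <;> omega
    refine ⟨fun i => ⟨(hpoint i).1, hrange i⟩,
      fun i => (avoids_two_mul_signedPoint_iff hq (hrange i).2).mpr (hpoint i).2,
      fun i j hij => (avoids_signedPoint_sub_add_iff hq ((hpoint i).1.trans (hpoint j).1.symm)
        (hpoint i).2 (hpoint j).2).mpr (hgap i j hij)⟩
  · rintro ⟨hrange, htwo, hpair⟩
    have hwall (i : Fin n) := (avoids_two_mul_signedPoint_iff hq (hrange i).2.2).mp (htwo i)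
    exact ⟨fun i => ⟨(hrange i).1, hwall i⟩, fun i j hij => (avoids_signedPoint_sub_add_iff hq
      ((hrange i).1.trans (hrange j).1.symm) (hwall i) (hwall j)).mp (hpair i j hij)⟩

lemma N_C_eq_sum_ncard_placementsOfParity (n a : ℕ) (hq : Odd q) (he : e < 2) :
    N_C n q 0 a = ∑ s : Fin n → ℤˣ, (placementsOfParity (signedLabel s) 1 a q e).ncard := by
  have hbij : Set.BijOn (fun x : (Fin n → ℤˣ) × (Fin n → ℕ) => signedPoint q x.1 x.2)
      {x | x.2 ∈ placementsOfParity (signedLabel x.1) 1 a q e}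
      {x : Fin n → ZMod q | (∀ i, Avoids (2 * x i) 0 a) ∧
        ∀ i j, i < j → Avoids (x i - x j) 0 a ∧ Avoids (x i + x j) 0 a} := by
    refine ⟨fun x hx => ((mem_placementsOfParity_iff_avoids_signedPoint hq).mp hx).2,
      fun x hx y hy hxy => ?_, fun x hx => ?_⟩
    · have hxrange := ((mem_placementsOfParity_iff_avoids_signedPoint hq).mp hx).1
      have hyrange := ((mem_placementsOfParity_iff_avoids_signedPoint hq).mp hy).1
      have heq (i : Fin n) : x.1 i = y.1 i ∧ x.2 i = y.2 i := by
        refine eq_of_units_mul_intCast_eq hq ((hxrange i).1.trans (hyrange i).1.symm)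
          (hxrange i).2.1 (hxrange i).2.2 (hyrange i).2.2 ?_
        rw [← two_mul_signedPoint hq, ← two_mul_signedPoint hq]
        exact congrArg (2 * ·) (congrFun hxy i)
      exact Prod.ext (funext fun i => (heq i).1) (funext fun i => (heq i).2)
    · have htwo_ne (i : Fin n) : 2 * x i ≠ 0 := by
        simpa using hx.1 i 0 le_rfl (Int.natCast_nonneg a)
      choose s P hparity hpos hlt hsP using fun i => exists_units_mul_natCast_eq hq he (htwo_ne i)
      have hx_eq : signedPoint q s P = x := by
        ext i
        rw [signedPoint, hsP, mul_right_comm, two_mul_inv_two hq, one_mul]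
      exact ⟨(s, P), (mem_placementsOfParity_iff_avoids_signedPoint hq).mpr
        ⟨fun i => ⟨hparity i, hpos i, hlt i⟩, hx_eq ▸ hx⟩, hx_eq⟩
  rw [N_C, ← hbij.ncard_eq]
  exact ncard_setOf_snd_mem (T := fun s => placementsOfParity (signedLabel s) 1 a q e)
    fun s => (finite_placements (signedLabel s) 1 a q).subset fun _ hP => hP.1

lemma sum_ncard_placements_signedLabel (m a : ℕ) (hq : Odd q) :
    ∑ s : Fin (m + 1) → ℤˣ, (placements (signedLabel s) 1 a q).ncard =
      2 * N_C (m + 1) q 0 a := by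
  simp only [ncard_placements_eq_sum_placementsOfParity]
  rw [Finset.sum_comm, Finset.sum_congr rfl fun e he =>
    (N_C_eq_sum_ncard_placementsOfParity (m + 1) a hq (Finset.mem_range.mp he)).symm]
  simp

end Residues

section Shift

variable {R : Type*} [CommRing R]

variable (R) in
/-- The backward shift operator `S` on two-sided sequences. Substituting it into a polynomial `g`
encodes `∑ k, g.coeff k * (q - k) ^ n` as the value of `g(S) (z ^ n)` at `q`. -/
def backShift : Module.End R (ℤ → R) := LinearMap.funLeft R R (· - 1)

lemma backShift_apply (u : ℤ → R) (z : ℤ) : backShift R u z = u (z - 1) := rfl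

lemma backShift_pow_apply (k : ℕ) (u : ℤ → R) (z : ℤ) : (backShift R ^ k) u z = u (z - k) := by
  induction k generalizing z with
  | zero => simp
  | succ k ih =>
    rw [pow_succ', Module.End.mul_apply, backShift_apply, ih, sub_sub, add_comm, Nat.cast_succ]

lemma aeval_backShift_apply {f : R[X]} {N : ℕ} (hN : f.natDegree < N) (u : ℤ → R) (z : ℤ) :
    aeval (backShift R) f u z = ∑ k ∈ Finset.range N, f.coeff k * u (z - k) := by
  simp [aeval_eq_sum_range' hN, backShift_pow_apply]

lemma polysum_eq_aeval_backShift (g : ℚ[X]) (q n : ℕ) :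
    polysum g q n = aeval (backShift ℚ) g (fun z => (z : ℚ) ^ n) q := by
  simp [polysum, aeval_backShift_apply g.natDegree.lt_succ_self]

lemma coeff_coe_mul_eq_aeval_backShift {f : R[X]} {q : ℕ} (hq : f.natDegree ≤ q)
    {E : PowerSeries R} {u : ℤ → R} (hu : ∀ k : ℕ, PowerSeries.coeff k E = u k) :
    PowerSeries.coeff q ((f : PowerSeries R) * E) = aeval (backShift R) f u q := by
  rw [aeval_backShift_apply (Nat.lt_succ_of_le hq), PowerSeries.coeff_mul,
    Finset.Nat.sum_antidiagonal_eq_sum_range_succ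
      fun i j => PowerSeries.coeff i (f : PowerSeries R) * PowerSeries.coeff j E]
  refine Finset.sum_congr rfl fun k hk => ?_
  rw [hu, Polynomial.coeff_coe, Nat.cast_sub (Nat.lt_succ_iff.mp (Finset.mem_range.mp hk))]

lemma aeval_backShift_intCast_mul (f : R[X]) (u : ℤ → R) (z : ℤ) :
    aeval (backShift R) f (fun y => (y : R) * u y) z =
      z * aeval (backShift R) f u z - aeval (backShift R) (X * derivative f) u z := by
  induction f using Polynomial.induction_on' with
  | add f g hf hg =>
    simp only [map_add, LinearMap.add_apply, Pi.add_apply, mul_add, hf, hg]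
    ring
  | monomial k c =>
    have hderiv : X * derivative (monomial k c) = monomial k (c * k) := by
      rcases k with _ | k
      · simp
      · simp [X_mul_monomial]
    simp only [hderiv, aeval_monomial, Module.End.mul_apply, Module.algebraMap_end_apply,
      Pi.smul_apply, smul_eq_mul, backShift_pow_apply]
    push_cast
    ring

lemma aeval_backShift_pow_mul_eq_zero {f : R[X]} {c : ℤ → R} (hc : aeval (backShift R) f c = 0)
    (n : ℕ) : aeval (backShift R) (f ^ (n + 1)) (fun z => (z : R) ^ n * c z) = 0 := by
  induction n with
  | zero => simpa using hc
  | succ n ih =>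
    have hmul (h : R[X]) :
        aeval (backShift R) (h * f ^ (n + 1)) (fun z => (z : R) ^ n * c z) = 0 := by
      rw [map_mul, Module.End.mul_apply, ih, map_zero]
    have hderiv : X * derivative (f ^ (n + 2)) =
        X * C ((n + 2 : ℕ) : R) * derivative f * f ^ (n + 1) := by
      rw [derivative_pow, Nat.add_sub_cancel_right (n + 1) 1]
      ring
    ext z
    simp only [pow_succ' (_ : R), mul_assoc]
    rw [aeval_backShift_intCast_mul, hderiv, hmul, pow_succ' f, hmul]
    simp

lemma aeval_backShift_expand_eq_zero (p : ℕ) (f : R[X]) {u : ℤ → R} {z : ℤ}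
    (hu : ∀ w, w ≡ z [ZMOD p] → u w = 0) : aeval (backShift R) (expand R p f) u z = 0 := by
  rw [expand_aeval, aeval_eq_sum_range, LinearMap.sum_apply, Finset.sum_apply]
  refine Finset.sum_eq_zero fun k _ => ?_
  rw [LinearMap.smul_apply, Pi.smul_apply, ← pow_mul, backShift_pow_apply, hu, smul_zero]
  simp [Int.ModEq]

variable (R) in
/-- The sequence `z ↦ z ^ n` restricted to the multiples of `d` and extended by zero. -/
def powOnMultiples (d n : ℕ) (z : ℤ) : R := if (d : ℤ) ∣ z then (z : R) ^ n else 0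

lemma sum_range_ite_dvd_sub {d r : ℕ} (hd : d ≠ 0) (hr : r ≠ 0) (z : ℤ) :
    ∑ i ∈ Finset.range r, (if ((d * r : ℕ) : ℤ) ∣ z - (d * i : ℕ) then 1 else 0 : R) =
      if (d : ℤ) ∣ z then 1 else 0 := by
  split_ifs with hdz
  · obtain ⟨y, rfl⟩ := hdz
    have hiff (i : ℕ) : ((d * r : ℕ) : ℤ) ∣ d * y - (d * i : ℕ) ↔ (r : ℤ) ∣ y - i := by
      push_cast
      rw [← mul_sub, mul_dvd_mul_iff_left (by exact_mod_cast hd)]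
    obtain ⟨i, hir, hiy⟩ := Int.existsUnique_equiv_nat y (b := r) (by omega)
    rw [Finset.sum_eq_single_of_mem i (Finset.mem_range.mpr (by omega)), if_pos]
    · exact (hiff i).mpr hiy.dvd
    · intro j hj hji
      refine if_neg fun hjy => hji ?_
      have hmod := (Int.modEq_iff_dvd.mpr ((hiff j).mp hjy)).trans hiy.symm
      exact (Int.natCast_modEq_iff.mp hmod).eq_of_lt_of_lt (Finset.mem_range.mp hj) (by omega)
  · refine Finset.sum_eq_zero fun i _ => if_neg fun hi => hdz ?_
    rw [Nat.cast_mul] at hi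
    simpa using dvd_add (dvd_of_mul_right_dvd hi) (Dvd.intro (i : ℤ) (Nat.cast_mul d i).symm)

/-- The difference of the two indicator functions, `r * [d * r ∣ z] - [d ∣ z]`, has mean zero over
`z, z - d, …, z - (r - 1) * d`. -/
lemma natCast_mul_aeval_backShift_powOnMultiples {d r n : ℕ} (hd : d ≠ 0) (hr : r ≠ 0) {f : R[X]}
    (hf : (∑ i ∈ Finset.range r, X ^ (d * i)) ^ (n + 1) ∣ f) (z : ℤ) :
    r * aeval (backShift R) f (powOnMultiples R (d * r) n) z =
      aeval (backShift R) f (powOnMultiples R d n) z := by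
  obtain ⟨h, rfl⟩ := hf
  set c : ℤ → R := fun z =>
    r * (if ((d * r : ℕ) : ℤ) ∣ z then 1 else 0) - if (d : ℤ) ∣ z then 1 else 0 with hc
  have hmean : aeval (backShift R) (∑ i ∈ Finset.range r, (X : R[X]) ^ (d * i)) c = 0 := by
    ext z
    have hdvd (i : ℕ) : (d : ℤ) ∣ z - (d * i : ℕ) ↔ (d : ℤ) ∣ z := by
      rw [Nat.cast_mul, dvd_sub_left (dvd_mul_right _ _)]
    simp only [hc, map_sum, map_pow, aeval_X, LinearMap.sum_apply, Finset.sum_apply,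
      backShift_pow_apply, Finset.sum_sub_distrib, ← Finset.mul_sum, hdvd]
    rw [sum_range_ite_dvd_sub hd hr]
    simp
  have hsplit : (fun z : ℤ => (z : R) ^ n * c z) =
      (r : R) • powOnMultiples R (d * r) n - powOnMultiples R d n := by
    ext z
    simp [hc, powOnMultiples, mul_sub, mul_comm (r : R)]
  have hzero := congrArg (aeval (backShift R) h) (aeval_backShift_pow_mul_eq_zero hmean n)
  rw [← Module.End.mul_apply, ← map_mul, mul_comm, hsplit, map_sub, map_smul, map_zero] at hzero
  simpa [sub_eq_zero] using congrFun hzero z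

end Shift

section Formula

/-- The factor relating, in dimension `m + 1`, the counting series of `placements` with `b = 1`
to the dilated series for `b = 0` and `a = 1`. -/
noncomputable def dilationPolynomial (m a : ℕ) : ℚ[X] :=
  X ^ (2 * (m + 1)) * phi2 a ^ m * phi a ^ 2

lemma sum_mk_ncard_placements_signedLabel (m : ℕ) {a : ℕ} (ha : a ≠ 0) :
    ∑ s : Fin (m + 1) → ℤˣ,
        PowerSeries.mk (fun Q => ((placements (signedLabel s) 1 a Q).ncard : ℚ)) =
      (2 : ℚ) • ((dilationPolynomial m a : PowerSeries ℚ) *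
        PowerSeries.expand a ha (PowerSeries.mk fun M => (M : ℚ) ^ (m + 1))) := by
  have hunit : ∑ s : Fin (m + 1) → ℤˣ,
      PowerSeries.mk (fun M => ((placements (signedLabel s) 0 1 M).ncard : ℚ)) =
        (2 : ℚ) • PowerSeries.mk fun M => (M : ℚ) ^ (m + 1) := by
    ext M
    simp only [map_sum, map_smul, PowerSeries.coeff_mk, smul_eq_mul]
    exact_mod_cast sum_ncard_unit_placements_signedLabel m M
  simp only [mk_ncard_placements_eq_expand (signedLabel_injective _) ha]
  rw [← Finset.mul_sum, ← map_sum, hunit, map_smul, mul_smul_comm]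
  simp [dilationPolynomial]

lemma N_C_eq_coeff (m : ℕ) {a q : ℕ} (ha : a ≠ 0) (hq : Odd q) :
    (N_C (m + 1) q 0 a : ℚ) = PowerSeries.coeff q ((dilationPolynomial m a : PowerSeries ℚ) *
      PowerSeries.expand a ha (PowerSeries.mk fun M => (M : ℚ) ^ (m + 1))) := by
  have hcoeff := congrArg (PowerSeries.coeff q) (sum_mk_ncard_placements_signedLabel m ha)
  simp only [map_sum, map_smul, PowerSeries.coeff_mk, smul_eq_mul] at hcoeff
  refine mul_left_cancel₀ two_ne_zero (Eq.trans ?_ hcoeff)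
  exact_mod_cast (sum_ncard_placements_signedLabel m a hq).symm

lemma pow_mul_N_C_eq_aeval_backShift {m a q : ℕ} (ha : a ≠ 0) (hq : Odd q)
    (hdeg : (dilationPolynomial m a).natDegree ≤ q) :
    (a : ℚ) ^ (m + 1) * N_C (m + 1) q 0 a =
      aeval (backShift ℚ) (dilationPolynomial m a) (powOnMultiples ℚ a (m + 1)) q := by
  rw [N_C_eq_coeff m ha hq, ← smul_eq_mul, ← map_smul, ← mul_smul_comm]
  refine coeff_coe_mul_eq_aeval_backShift hdeg fun k => ?_
  rw [map_smul, PowerSeries.coeff_expand, smul_eq_mul, powOnMultiples]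
  simp only [Int.natCast_dvd_natCast, PowerSeries.coeff_mk, mul_ite, mul_zero]
  refine if_ctx_congr Iff.rfl (fun hk => ?_) fun _ => rfl
  rw [← mul_pow, ← Nat.cast_mul, Nat.mul_div_cancel' hk, Int.cast_natCast]

lemma phi_dvd_phi2 {a : ℕ} (ha : Odd a) : phi a ∣ phi2 a := by
  obtain ⟨f, hf⟩ : (1 + X : ℚ[X]) ∣ 1 + X ^ a := by
    simpa using ha.add_dvd_pow_add_pow (1 : ℚ[X]) X
  refine ⟨f, mul_left_cancel₀ (a := (1 - X ^ 2 : ℚ[X])) ?_ ?_⟩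
  · exact fun h => by simpa using congrArg (eval 0) h
  · linear_combination one_sub_X_sq_mul_phi2 a - (1 + X) * f * one_sub_X_mul_phi a +
      (1 - X ^ a) * hf

lemma phi_two_mul (r : ℕ) : phi (2 * r) = (1 + X) * phi2 r := by
  refine mul_left_cancel₀ (a := (1 - X : ℚ[X])) ?_ ?_
  · exact fun h => by simpa using congrArg (eval 0) h
  · linear_combination one_sub_X_mul_phi (2 * r) - one_sub_X_sq_mul_phi2 r

lemma phi2_two_mul (r : ℕ) : phi2 (2 * r) = (1 + X ^ (2 * r)) * phi2 r := by
  refine mul_left_cancel₀ (a := (1 - X ^ 2 : ℚ[X])) ?_ ?_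
  · exact fun h => by simpa using congrArg (eval 0) h
  · linear_combination one_sub_X_sq_mul_phi2 (2 * r) - (1 + X ^ (2 * r)) * one_sub_X_sq_mul_phi2 r

theorem pow_mul_N_C_of_odd {m a q : ℕ} (ha : Odd a) (hq : Odd q)
    (hdeg : (dilationPolynomial m a).natDegree ≤ q) :
    (a : ℚ) ^ (m + 2) * N_C (m + 1) q 0 a = polysum (dilationPolynomial m a) q (m + 1) := by
  have hdvd : (∑ i ∈ Finset.range a, (X : ℚ[X]) ^ (1 * i)) ^ (m + 2) ∣ dilationPolynomial m a := by
    simp only [one_mul]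
    rw [← phi, pow_add, dilationPolynomial]
    exact mul_dvd_mul_right (dvd_mul_of_dvd_right (pow_dvd_pow_of_dvd (phi_dvd_phi2 ha) m) _) _
  have hone : powOnMultiples ℚ 1 (m + 1) = fun z : ℤ => (z : ℚ) ^ (m + 1) := by
    ext z
    simp [powOnMultiples]
  rw [polysum_eq_aeval_backShift, ← hone,
    ← natCast_mul_aeval_backShift_powOnMultiples one_ne_zero ha.pos.ne' hdvd, one_mul,
    ← pow_mul_N_C_eq_aeval_backShift ha.pos.ne' hq hdeg, pow_succ' _ (m + 1), mul_assoc]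

/-- The odd part of `dilationPolynomial m (2 * r)` is twice this polynomial. -/
noncomputable def halfOddPart (m r : ℕ) : ℚ[X] :=
  X ^ (2 * (m + 1) + 1) * phi2 (2 * r) ^ m * phi2 r ^ 2

lemma halfOddPart_eq_X_mul_expand (m r : ℕ) :
    halfOddPart m r = X * expand ℚ 2 (X ^ (m + 1) * phi (2 * r) ^ m * phi r ^ 2) := by
  simp only [halfOddPart, phi2_eq_expand, map_mul, map_pow, expand_X]
  ring

lemma dilationPolynomial_two_mul (m r : ℕ) :
    dilationPolynomial m (2 * r) = 2 * halfOddPart m r +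
      expand ℚ 2 (X ^ (m + 1) * phi (2 * r) ^ m * phi r ^ 2 * (1 + X)) := by
  simp only [dilationPolynomial, halfOddPart, phi_two_mul, phi2_eq_expand, map_mul,
    map_pow, map_add, map_one, expand_X]
  ring

lemma phi2_pow_dvd_halfOddPart (m r : ℕ) : phi2 r ^ (m + 2) ∣ halfOddPart m r := by
  rw [pow_add, halfOddPart, phi2_two_mul]
  exact mul_dvd_mul_right (dvd_mul_of_dvd_right (pow_dvd_pow_of_dvd (dvd_mul_left _ _) m) _) _

lemma aeval_backShift_dilationPolynomial_two_mul (m r n : ℕ) {q : ℕ} (hq : Odd q) :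
    aeval (backShift ℚ) (dilationPolynomial m (2 * r)) (powOnMultiples ℚ (2 * r) n) q =
      2 * aeval (backShift ℚ) (halfOddPart m r) (powOnMultiples ℚ (2 * r) n) q := by
  have hodd (w : ℤ) (hw : w ≡ q [ZMOD (2 : ℕ)]) : powOnMultiples ℚ (2 * r) n w = 0 := by
    refine if_neg fun hdvd => ?_
    rw [Nat.cast_mul] at hdvd
    have hw_even := dvd_of_mul_right_dvd hdvd
    have hq_emod := Nat.odd_iff.mp hq
    rw [Int.ModEq] at hw
    omega
  rw [dilationPolynomial_two_mul, map_add, LinearMap.add_apply, Pi.add_apply,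
    aeval_backShift_expand_eq_zero 2 _ hodd, add_zero, map_mul, map_ofNat,
    Module.End.mul_apply, Module.End.ofNat_apply, Pi.smul_apply, nsmul_eq_mul, Nat.cast_ofNat]

lemma polysum_halfOddPart (m r n : ℕ) {q : ℕ} (hq : Odd q) :
    polysum (halfOddPart m r) q n =
      aeval (backShift ℚ) (halfOddPart m r) (powOnMultiples ℚ 2 n) q := by
  rw [polysum_eq_aeval_backShift, halfOddPart_eq_X_mul_expand, mul_comm, map_mul,
    ← sub_eq_zero, ← Pi.sub_apply, ← map_sub,
    Module.End.mul_apply, aeval_X]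
  refine aeval_backShift_expand_eq_zero 2 _ fun w hw => ?_
  have hw_even : (2 : ℤ) ∣ w - 1 := by
    have hq_emod := Nat.odd_iff.mp hq
    rw [Int.ModEq] at hw
    omega
  simp [backShift_apply, powOnMultiples, hw_even]

theorem pow_mul_N_C_of_even {m r q : ℕ} (hr : r ≠ 0) (hq : Odd q)
    (hdeg : (dilationPolynomial m (2 * r)).natDegree ≤ q) :
    ((2 * r : ℕ) : ℚ) ^ (m + 2) * N_C (m + 1) q 0 (2 * r : ℕ) =
      4 * polysum (halfOddPart m r) q (m + 1) := by
  rw [pow_succ', mul_assoc, pow_mul_N_C_eq_aeval_backShift (by omega) hq hdeg,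
    aeval_backShift_dilationPolynomial_two_mul m r (m + 1) hq, polysum_halfOddPart m r _ hq,
    ← natCast_mul_aeval_backShift_powOnMultiples two_ne_zero hr (phi2_pow_dvd_halfOddPart m r)]
  push_cast
  ring

end Formula

/-- Proposition 4.2. Formula for the number of points avoiding the
`C_n` deformation with hyperplanes `2x_i, x_i ± x_j = 0, 1, ..., a`,
for all large odd `q`. -/
theorem statement6 (n a : ℕ) (hn : 2 ≤ n) (ha : 1 ≤ a) :
    ∃ N : ℕ, ∀ q : ℕ, Odd q → N < q →
      (Even a →
        (a : ℚ) ^ (n + 1) * (N_C n q 0 (a : ℤ) : ℚ) =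
          4 * polysum (X ^ (2 * n + 1) * (phi2 a) ^ (n - 1) * (phi2 (a / 2)) ^ 2) q n) ∧
      (Odd a →
        (a : ℚ) ^ (n + 1) * (N_C n q 0 (a : ℤ) : ℚ) =
          polysum (X ^ (2 * n) * (phi2 a) ^ (n - 1) * (phi a) ^ 2) q n) := by
  obtain ⟨m, rfl⟩ : ∃ m, n = m + 1 := ⟨n - 1, by omega⟩
  refine ⟨(dilationPolynomial m a).natDegree, fun q hq hN => ⟨fun heven => ?_, fun hodd => ?_⟩⟩
  · obtain ⟨r, rfl⟩ := heven.two_dvd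
    rw [Nat.mul_div_cancel_left r two_pos]
    exact pow_mul_N_C_of_even (by omega) hq hN.le
  · exact pow_mul_N_C_of_odd hodd hq hN.le
end

section
/- Let n \ge 2 and a \ge 1 be integers. There exists an integer N (depending on n and a) such that for every odd integer q > N, N_B(n,q,0,a) = N_C(n,q,0,a). In other words, for large odd q, the number of points of (ZMod q)^n avoiding the type B_n deformation (hyperplanes x_i = 0,...,a and x_i \pm x_j = 0,...,a) equals the number of points avoiding the type C_n deformation (hyperplanes 2x_i = 0,...,a and x_i \pm x_j = 0,...,a). -/
open Polynomial

/-!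
Write `q = 2 * M + 1`, represent residues by integers in `[-M, M]` and read the coordinates by
increasing absolute value. Up to wrapping around at `M`, the conditions on pairs say that two
letters at distance at most `a` increase for the order `x_1 < ⋯ < x_n < -x_n < ⋯ < -x_1`, and the
conditions on single coordinates only shorten the range of the first and of the last letter.

Pushing all letters outwards makes the number of such words with given signs of the first and last
letters depend on the range alone. Rotating the cyclic order of letters exchanges the signs: it
identifies the words of type `(+, +)` with those of type `(-, -)`, and the words of type `(-, +)`
with those of type `(+, -)` for the range shortened by `a`. If any two letters wrap around, so do
the last two, and reflecting the last letter shows that the number of words that do is a combination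
of values at different ranges of the number of words that end in a negative letter whose coordinate
is smaller than that of the letter before. This number satisfies the same recursion in `M` as the
number of words of type `(+, +)`, hence equals it, and both `N_B` and `N_C` become the same sum of
class sizes.
-/

theorem eq_of_add_shift_eq {u v : ℤ → ℕ} {a : ℕ} (ha : 0 < a) (hneg : ∀ M < 0, u M = v M)
    (hshift : ∀ M, u M + v (M - a) = v M + u (M - a)) (M : ℤ) : u M = v M := by
  by_cases hM : M < 0
  · exact hneg M hM
  · have ih := eq_of_add_shift_eq ha hneg hshift (M - a)
    have := hshift M
    omega
termination_by (M + 1).toNat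

section Configurations

variable {n a : ℕ} {M : ℤ} {x : Fin n → ℤ}

/-- The letter read at the value `v` of the `i`-th coordinate. Positive values give the letters
`0, …, n - 1`, negative ones the letters `n + 1, …, 2 * n` in reverse order of the coordinates;
the origin would carry the missing letter `n`. -/
def letter (i : Fin n) (v : ℤ) : ℤ := if 0 < v then i else 2 * n - i

/-- A placement of `n` signed integers in `[-M, M]` such that, read by increasing absolute value,
letters at distance at most `a` increase. These are the signed representatives whose pairwise sums
and differences avoid `[0, a]`, up to wrapping around modulo `2 * M + 1`. -/
structure IsConfig (a : ℕ) (M : ℤ) (x : Fin n → ℤ) : Prop where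
  ne_zero : ∀ i, x i ≠ 0
  natAbs_le : ∀ i, ((x i).natAbs : ℤ) ≤ M
  letter_lt : ∀ i k, i ≠ k → (x i).natAbs ≤ (x k).natAbs → (x k).natAbs ≤ (x i).natAbs + a →
    letter i (x i) < letter k (x k)

namespace IsConfig

theorem natAbs_ne (h : IsConfig a M x) {i k : Fin n} (hik : i ≠ k) :
    (x i).natAbs ≠ (x k).natAbs := by
  intro he
  have := h.letter_lt i k hik he.le (by omega)
  have := h.letter_lt k i hik.symm he.ge (by omega)
  omega

theorem letter_le (h : IsConfig a M x) {i k : Fin n} (hle : (x i).natAbs ≤ (x k).natAbs)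
    (hclose : (x k).natAbs ≤ (x i).natAbs + a) : letter i (x i) ≤ letter k (x k) := by
  rcases eq_or_ne i k with rfl | hik
  · rfl
  · exact (h.letter_lt i k hik hle hclose).le

theorem of_natAbs_le (h : IsConfig a M x) {M' : ℤ} (hM' : ∀ i, ((x i).natAbs : ℤ) ≤ M') :
    IsConfig a M' x :=
  ⟨h.ne_zero, hM', h.letter_lt⟩

theorem finite_setOf (n a : ℕ) (M : ℤ) : {x : Fin n → ℤ | IsConfig a M x}.Finite :=
  (Set.finite_Icc (fun _ => -M) fun _ => M).subset fun x h =>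
    ⟨fun i => show -M ≤ x i by have := h.natAbs_le i; omega,
      fun i => show x i ≤ M by have := h.natAbs_le i; omega⟩

end IsConfig

/-- The number of configurations in `[-M, M]` with the property `P`. -/
noncomputable def configCount (n a : ℕ) (M : ℤ) (P : (Fin n → ℤ) → Prop) : ℕ :=
  Set.ncard {x : Fin n → ℤ | IsConfig a M x ∧ P x}

theorem configCount_congr {P Q : (Fin n → ℤ) → Prop} (h : ∀ x, IsConfig a M x → (P x ↔ Q x)) :
    configCount n a M P = configCount n a M Q :=
  congrArg Set.ncard (Set.ext fun x => and_congr_right (h x))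

theorem configCount_eq_add (P Q : (Fin n → ℤ) → Prop) :
    configCount n a M P =
      configCount n a M (fun x => P x ∧ Q x) + configCount n a M (fun x => P x ∧ ¬ Q x) := by
  have hfin : {x : Fin n → ℤ | IsConfig a M x ∧ P x}.Finite :=
    (IsConfig.finite_setOf n a M).subset fun x hx => hx.1
  simp only [configCount, ← and_assoc]
  exact (Set.ncard_inter_add_ncard_sdiff_eq_ncard _ {x | Q x} hfin).symm

theorem configCount_eq_sum_fiber {ι : Type*} [Fintype ι] (f : (Fin n → ℤ) → ι)
    (P : (Fin n → ℤ) → Prop) :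
    configCount n a M P = ∑ s, configCount n a M fun x => f x = s ∧ P x := by
  classical
  have hfin : {x : Fin n → ℤ | IsConfig a M x ∧ P x}.Finite :=
    (IsConfig.finite_setOf n a M).subset fun x hx => hx.1
  have hfiber (s : ι) : configCount n a M (fun x => f x = s ∧ P x) =
      {x ∈ hfin.toFinset | f x = s}.card := by
    rw [configCount, ← Set.ncard_coe_finset]
    congr 1
    ext x
    simp only [Finset.coe_filter, Set.Finite.mem_toFinset, Set.mem_ofPred_eq]
    tauto
  rw [Finset.sum_congr rfl fun s _ => hfiber s, configCount, Set.ncard_eq_toFinset_card _ hfin]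
  exact Finset.card_eq_sum_card_fiberwise (t := Finset.univ) fun x _ => Finset.mem_univ _

theorem configCount_eq_of_invOn {M' : ℤ} {P Q : (Fin n → ℤ) → Prop}
    (f g : (Fin n → ℤ) → Fin n → ℤ)
    (hf : ∀ x, IsConfig a M x → P x → IsConfig a M' (f x) ∧ Q (f x) ∧ g (f x) = x)
    (hg : ∀ y, IsConfig a M' y → Q y → IsConfig a M (g y) ∧ P (g y) ∧ f (g y) = y) :
    configCount n a M P = configCount n a M' Q :=
  Set.BijOn.ncard_eq (f := f) <| Set.InvOn.bijOn (f' := g)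
    ⟨fun x hx => (hf x hx.1 hx.2).2.2, fun y hy => (hg y hy.1 hy.2).2.2⟩
    (fun x hx => ⟨(hf x hx.1 hx.2).1, (hf x hx.1 hx.2).2.1⟩)
    (fun y hy => ⟨(hg y hy.1 hy.2).1, (hg y hy.1 hy.2).2.1⟩)

theorem configCount_of_neg [Nonempty (Fin n)] (hM : M < 0) (P : (Fin n → ℤ) → Prop) :
    configCount n a M P = 0 := by
  have hempty : {x : Fin n → ℤ | IsConfig a M x ∧ P x} = ∅ :=
    Set.eq_empty_of_forall_notMem fun x hx => by
      have := hx.1.natAbs_le (Classical.arbitrary (Fin n))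
      omega
  rw [configCount, hempty, Set.ncard_empty]

theorem configCount_truncate {M' : ℤ} (hM' : M' ≤ M) (P : (Fin n → ℤ) → Prop) :
    configCount n a M' P = configCount n a M fun x => P x ∧ ∀ k, ((x k).natAbs : ℤ) ≤ M' :=
  configCount_eq_of_invOn id id
    (fun _ h hP => ⟨h.of_natAbs_le fun k => (h.natAbs_le k).trans hM', ⟨hP, h.natAbs_le⟩, rfl⟩)
    fun _ h hP => ⟨h.of_natAbs_le hP.2, hP.1, rfl⟩

end Configurations

section EndSigns

variable {n a : ℕ} {M : ℤ} {x y : Fin n → ℤ}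

/-- The coordinate of least absolute value, unique for a configuration and chosen arbitrarily
otherwise. -/
noncomputable def firstIndex [Nonempty (Fin n)] (x : Fin n → ℤ) : Fin n :=
  (Finite.exists_min fun k => (x k).natAbs).choose

/-- The coordinate of greatest absolute value, with the same convention as for `firstIndex`. -/
noncomputable def lastIndex [Nonempty (Fin n)] (x : Fin n → ℤ) : Fin n :=
  (Finite.exists_max fun k => (x k).natAbs).choose

theorem natAbs_firstIndex_le [Nonempty (Fin n)] (x : Fin n → ℤ) (k : Fin n) :
    (x (firstIndex x)).natAbs ≤ (x k).natAbs :=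
  (Finite.exists_min fun k => (x k).natAbs).choose_spec k

theorem natAbs_le_lastIndex [Nonempty (Fin n)] (x : Fin n → ℤ) (k : Fin n) :
    (x k).natAbs ≤ (x (lastIndex x)).natAbs :=
  (Finite.exists_max fun k => (x k).natAbs).choose_spec k

theorem IsConfig.firstIndex_eq [Nonempty (Fin n)] (h : IsConfig a M x) {i : Fin n}
    (hi : ∀ k, (x i).natAbs ≤ (x k).natAbs) : firstIndex x = i :=
  not_not.1 fun hne => h.natAbs_ne hne (le_antisymm (natAbs_firstIndex_le x i) (hi _))

theorem IsConfig.lastIndex_eq [Nonempty (Fin n)] (h : IsConfig a M x) {i : Fin n}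
    (hi : ∀ k, (x k).natAbs ≤ (x i).natAbs) : lastIndex x = i :=
  not_not.1 fun hne => h.natAbs_ne hne (le_antisymm (hi _) (natAbs_le_lastIndex x i))

/-- Whether the letters of least and of greatest absolute value are positive. -/
noncomputable def endSigns [Nonempty (Fin n)] (x : Fin n → ℤ) : Bool × Bool :=
  (decide (0 < x (firstIndex x)), decide (0 < x (lastIndex x)))

theorem IsConfig.endSigns_of_monotone [Nonempty (Fin n)] (h : IsConfig a M y) {σ : Fin n → Fin n}
    (hσ : σ.Surjective)
    (hmono : ∀ i k, (x i).natAbs ≤ (x k).natAbs → (y (σ i)).natAbs ≤ (y (σ k)).natAbs) :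
    endSigns y = (decide (0 < y (σ (firstIndex x))), decide (0 < y (σ (lastIndex x)))) := by
  rw [endSigns, h.firstIndex_eq (i := σ (firstIndex x)) (hσ.forall.2 fun k =>
      hmono _ k (natAbs_firstIndex_le x k)),
    h.lastIndex_eq (i := σ (lastIndex x)) (hσ.forall.2 fun k =>
      hmono k _ (natAbs_le_lastIndex x k))]

/-- The number of configurations in `[-M, M]` with end signs `s`. -/
noncomputable def classCount (n a : ℕ) [Nonempty (Fin n)] (M : ℤ) (s : Bool × Bool) : ℕ :=
  configCount n a M fun x => endSigns x = s

/-- Every letter moved away from the origin by `d`. -/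
def push (d : ℤ) (x : Fin n → ℤ) (k : Fin n) : ℤ := if 0 < x k then x k + d else x k - d

theorem push_neg_push {d : ℤ} (h : ∀ k, x k ≠ 0) (hd : ∀ k, 0 < (x k).natAbs + d) :
    push (-d) (push d x) = x := by
  funext k
  have := h k
  have := hd k
  grind [push]

theorem isConfig_push (h : IsConfig a M x) {d : ℤ} (hd : ∀ k, 0 < (x k).natAbs + d) :
    IsConfig a (M + d) (push d x) := by
  have habs (k) : ((push d x k).natAbs : ℤ) = (x k).natAbs + d := by
    have := hd k
    have := h.ne_zero k
    simp only [push]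
    omega
  refine ⟨fun i => ?_, fun i => ?_, fun i k hik h1 h2 => ?_⟩
  · have := habs i
    have := hd i
    omega
  · have := habs i
    have := h.natAbs_le i
    omega
  · have := habs i
    have := habs k
    have := hd i
    have := hd k
    have := h.letter_lt i k hik (by omega) (by omega)
    simp only [push, letter] at this ⊢
    omega

theorem IsConfig.endSigns_push [Nonempty (Fin n)] (h : IsConfig a M x) {d : ℤ}
    (hd : ∀ k, 0 < (x k).natAbs + d) : endSigns (push d x) = endSigns x := by
  have hsign (k) : 0 < push d x k ↔ 0 < x k := by
    have := hd k
    have := h.ne_zero k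
    simp only [push]
    omega
  rw [(isConfig_push h hd).endSigns_of_monotone (x := x) Function.surjective_id]
  · simp only [id, hsign, endSigns]
  · intro i k hik
    have := hd i
    have := hd k
    simp only [id, push]
    omega

theorem configCount_endSigns_of_bounds [Nonempty (Fin n)] {d e : ℤ} (hd : 0 ≤ d) (he : 0 ≤ e)
    (s : Bool × Bool) :
    configCount n a M (fun x => endSigns x = s ∧
      ∀ k, d < (x k).natAbs ∧ ((x k).natAbs : ℤ) ≤ M - e) = classCount n a (M - d - e) s := by
  refine configCount_eq_of_invOn (push (-d)) (push d) (fun x h hx => ?_) fun x h hx => ?_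
  · have hpos (k) : 0 < (x k).natAbs + -d := by have := hx.2 k; omega
    refine ⟨?_, (h.endSigns_push hpos).trans hx.1, ?_⟩
    · convert isConfig_push (h.of_natAbs_le fun k => (hx.2 k).2) hpos using 1
      ring
    · simpa using push_neg_push h.ne_zero hpos
  · have hpos (k) : 0 < (x k).natAbs + d := by have := h.ne_zero k; omega
    have habs (k) : (((push d x) k).natAbs : ℤ) = (x k).natAbs + d := by
      have := h.ne_zero k
      simp only [push]
      omega
    refine ⟨(isConfig_push h hpos).of_natAbs_le fun k => ?_,
      ⟨(h.endSigns_push hpos).trans hx, fun k => ?_⟩, push_neg_push h.ne_zero hpos⟩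
    · have := habs k
      have := h.natAbs_le k
      omega
    · have := habs k
      have := h.natAbs_le k
      have := h.ne_zero k
      omega

end EndSigns

section Margins

variable {n a f c : ℕ} {M : ℤ} {x : Fin n → ℤ}

/-- Positive letters keep more than `f` away from the origin and negative ones keep at least `c`
away from the end `M` of the range. -/
def HasMargins (f c : ℕ) (M : ℤ) (x : Fin n → ℤ) : Prop :=
  ∀ k, (0 < x k → f < x k) ∧ (x k < 0 → -x k + c ≤ M)

/-- If the first letter is negative, then positive letters come more than `a` after it; if the last
letter is positive, then negative letters come more than `a` before it. -/
theorem IsConfig.hasMargins_iff [Nonempty (Fin n)] (h : IsConfig a M x) (hf : f ≤ a)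
    (hc : c ≤ a) :
    HasMargins f c M x ↔ ∀ k, (if 0 < x (firstIndex x) then (f : ℤ) else 0) < (x k).natAbs ∧
      ((x k).natAbs : ℤ) ≤ M - if 0 < x (lastIndex x) then (0 : ℤ) else c := by
  have hp := natAbs_firstIndex_le x
  have hl := natAbs_le_lastIndex x
  set p := firstIndex x
  set l := lastIndex x
  have hp0 := h.ne_zero p
  have hl0 := h.ne_zero l
  refine ⟨fun hx k => ?_, fun hx k => ?_⟩
  · have := hp k
    have := hl k
    have := hx p
    have := hx l
    have := h.ne_zero k
    have := h.natAbs_le k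
    omega
  · have := hx k
    have hpk : x p < 0 → 0 < x k → (x p).natAbs + a < (x k).natAbs := fun h1 h2 => by
      have := h.letter_lt p k (by rintro hpk; rw [hpk] at h1; omega) (hp k)
      simp only [letter] at this
      omega
    have hkl : 0 < x l → x k < 0 → (x k).natAbs + a < (x l).natAbs := fun h1 h2 => by
      have := h.letter_lt k l (by rintro hkl; rw [hkl] at h2; omega) (hl k)
      simp only [letter] at this
      omega
    have := h.natAbs_le l
    omega

theorem configCount_endSigns_hasMargins [Nonempty (Fin n)] (hf : f ≤ a) (hc : c ≤ a)
    (s : Bool × Bool) :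
    configCount n a M (fun x => endSigns x = s ∧ HasMargins f c M x) =
      classCount n a (M - (if s.1 then (f : ℤ) else 0) - if s.2 then (0 : ℤ) else c) s := by
  rw [← configCount_endSigns_of_bounds (by split_ifs <;> omega) (by split_ifs <;> omega)]
  refine configCount_congr fun x h => and_congr_right ?_
  rintro rfl
  simp only [h.hasMargins_iff hf hc, endSigns, decide_eq_true_eq]

theorem configCount_hasMargins [Nonempty (Fin n)] (hf : f ≤ a) (hc : c ≤ a) :
    configCount n a M (HasMargins f c M) =
      classCount n a (M - f) (true, true) + classCount n a (M - f - c) (true, false) +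
        classCount n a M (false, true) + classCount n a (M - c) (false, false) := by
  rw [configCount_eq_sum_fiber endSigns]
  simp only [configCount_endSigns_hasMargins hf hc, Fintype.sum_prod_type, Fintype.sum_bool]
  simp [add_assoc]

end Margins

section Rotation

variable {n a : ℕ} {M d : ℤ} {x : Fin n → ℤ}

/-- The rotation of the cyclic order of the letters that exchanges positive and negative ones:
positive letters move by `d`, negative ones by `a + d`, and the coordinates are reversed. -/
def swapSigns (a : ℕ) (d : ℤ) (x : Fin n → ℤ) (k : Fin n) : ℤ :=
  if 0 < x k.rev then -(x k.rev + d) else -x k.rev + (a + d)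

/-- The positions that `swapSigns a d` assigns to the letters of `x` lie in `[1, M]`. -/
def CanSwap (a : ℕ) (d M : ℤ) (x : Fin n → ℤ) : Prop :=
  ∀ k, (0 < x k → 0 < x k + d ∧ x k + d ≤ M) ∧
    (x k < 0 → 0 < -x k + (a + d) ∧ -x k + (a + d) ≤ M)

theorem IsConfig.natAbs_swapSigns_le (h : IsConfig a M x) (hx : CanSwap a d M x) {i k : Fin n} :
    (swapSigns a d x i.rev).natAbs ≤ (swapSigns a d x k.rev).natAbs ↔
      (x i).natAbs ≤ (x k).natAbs := by
  rcases eq_or_ne i k with rfl | hik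
  · simp
  have := hx i
  have := hx k
  have := h.ne_zero i
  have := h.ne_zero k
  have hlt := h.letter_lt i k hik
  have hgt := h.letter_lt k i hik.symm
  simp only [swapSigns, letter, Fin.rev_rev] at hlt hgt ⊢
  omega

theorem isConfig_swapSigns (h : IsConfig a M x) (hx : CanSwap a d M x) :
    IsConfig a M (swapSigns a d x) := by
  refine ⟨fun i => ?_, fun i => ?_, fun i k hik h1 h2 => ?_⟩
  · have := hx i.rev
    have := h.ne_zero i.rev
    simp only [swapSigns]
    omega
  · have := hx i.rev
    have := h.ne_zero i.rev
    simp only [swapSigns]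
    omega
  · have hle : (x i.rev).natAbs ≤ (x k.rev).natAbs := by
      rwa [← h.natAbs_swapSigns_le hx, Fin.rev_rev, Fin.rev_rev]
    have := hx i.rev
    have := hx k.rev
    have := h.ne_zero i.rev
    have := h.ne_zero k.rev
    have hne : i.rev ≠ k.rev := Fin.rev_injective.ne hik
    have := h.natAbs_ne hne
    have := h.letter_lt i.rev k.rev hne hle
    simp only [swapSigns, letter, Fin.val_rev] at this h1 h2 ⊢
    omega

theorem IsConfig.endSigns_swapSigns [Nonempty (Fin n)] (h : IsConfig a M x)
    (hx : CanSwap a d M x) : endSigns (swapSigns a d x) = (endSigns x).map not not := by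
  have hsign (k) : decide (0 < swapSigns a d x k.rev) = !decide (0 < x k) := by
    have := hx k
    have := h.ne_zero k
    simp only [swapSigns, Fin.rev_rev, ← decide_not, decide_eq_decide]
    omega
  rw [(isConfig_swapSigns h hx).endSigns_of_monotone Fin.rev_surjective fun i k =>
    (h.natAbs_swapSigns_le hx).2]
  simp only [hsign, endSigns, Prod.map]

theorem swapSigns_neg_swapSigns (h : ∀ k, x k ≠ 0) (hx : CanSwap a d M x) :
    swapSigns a (-(a + d)) (swapSigns a d x) = x := by
  funext k
  have := h k
  have := hx k
  simp only [swapSigns, Fin.rev_rev]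
  omega

theorem configCount_hasMargins_swap [Nonempty (Fin n)] (s : Bool × Bool) :
    configCount n a M (fun x => endSigns x = s ∧ HasMargins a 0 M x) =
      configCount n a M (fun x => endSigns x = s.map not not ∧ HasMargins 0 a M x) := by
  refine configCount_eq_of_invOn (swapSigns a (-a)) (swapSigns a 0) (fun x h hx => ?_)
    fun x h hx => ?_
  · have hswap : CanSwap a (-a) M x := fun k => by
      have := hx.2 k
      have := h.natAbs_le k
      omega
    refine ⟨isConfig_swapSigns h hswap, ⟨?_, fun k => ?_⟩, ?_⟩
    · rw [h.endSigns_swapSigns hswap, hx.1]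
    · have := hx.2 k.rev
      have := hswap k.rev
      have := h.natAbs_le k.rev
      simp only [swapSigns]
      omega
    · simpa using swapSigns_neg_swapSigns h.ne_zero hswap
  · have hswap : CanSwap a 0 M x := fun k => by
      have := hx.2 k
      have := h.natAbs_le k
      omega
    refine ⟨isConfig_swapSigns h hswap, ⟨?_, fun k => ?_⟩, ?_⟩
    · rw [h.endSigns_swapSigns hswap, hx.1]
      simp [Prod.map]
    · have := hx.2 k.rev
      have := h.ne_zero k.rev
      have := h.natAbs_le k.rev
      simp only [swapSigns]
      omega
    · simpa using swapSigns_neg_swapSigns h.ne_zero hswap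

theorem classCount_true_true [Nonempty (Fin n)] (M : ℤ) :
    classCount n a M (true, true) = classCount n a M (false, false) := by
  have h := configCount_hasMargins_swap (n := n) (a := a) (M := M + a) (true, true)
  simpa [configCount_endSigns_hasMargins] using h

theorem classCount_false_true [Nonempty (Fin n)] (M : ℤ) :
    classCount n a M (false, true) = classCount n a (M - a) (true, false) := by
  have h := configCount_hasMargins_swap (n := n) (a := a) (M := M) (false, true)
  simpa [configCount_endSigns_hasMargins] using h

end Rotation

section LastLetter

variable {n a : ℕ} [Nontrivial (Fin n)] {M M' s : ℤ} {x : Fin n → ℤ}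

theorem exists_max_natAbs_of_ne_lastIndex (x : Fin n → ℤ) :
    ∃ j, j ≠ lastIndex x ∧ ∀ k, k ≠ lastIndex x → (x k).natAbs ≤ (x j).natAbs :=
  Set.exists_max_image {k | k ≠ lastIndex x} (fun k => (x k).natAbs) (Set.toFinite _)
    (exists_ne _)

/-- The coordinate of greatest absolute value among those other than `lastIndex x`. -/
noncomputable def penultIndex (x : Fin n → ℤ) : Fin n :=
  (exists_max_natAbs_of_ne_lastIndex x).choose

theorem penultIndex_ne (x : Fin n → ℤ) : penultIndex x ≠ lastIndex x :=
  (exists_max_natAbs_of_ne_lastIndex x).choose_spec.1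

theorem natAbs_le_penultIndex {k : Fin n} (hk : k ≠ lastIndex x) :
    (x k).natAbs ≤ (x (penultIndex x)).natAbs :=
  (exists_max_natAbs_of_ne_lastIndex x).choose_spec.2 k hk

theorem IsConfig.penultIndex_eq (h : IsConfig a M x) {j : Fin n} (hj : j ≠ lastIndex x)
    (hmax : ∀ k, k ≠ lastIndex x → (x k).natAbs ≤ (x j).natAbs) : penultIndex x = j :=
  not_not.1 fun hne => h.natAbs_ne hne
    (le_antisymm (hmax _ (penultIndex_ne x)) (natAbs_le_penultIndex hj))

theorem IsConfig.natAbs_penultIndex_lt (h : IsConfig a M x) :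
    (x (penultIndex x)).natAbs < (x (lastIndex x)).natAbs :=
  (natAbs_le_lastIndex x _).lt_of_ne (h.natAbs_ne (penultIndex_ne x))

/-- After a letter of coordinate `j` at `w`, the coordinate `i` may take the value `u` as the last
letter of a configuration with `HasMargins a 0`. -/
def FitsLast (a : ℕ) (M : ℤ) (i j : Fin n) (w u : ℤ) : Prop :=
  w.natAbs < u.natAbs ∧ (u.natAbs : ℤ) ≤ M ∧
    (u.natAbs ≤ w.natAbs + a → letter j w < letter i u) ∧ (0 < u → a < u)

/-- The number of configurations with `HasMargins a 0` whose last coordinate `i`, last but one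
coordinate `j` and values `w = x j`, `u = x i` satisfy `p i j w u`. -/
noncomputable def lastCount (n a : ℕ) [Nontrivial (Fin n)] (M : ℤ)
    (p : Fin n → Fin n → ℤ → ℤ → Prop) : ℕ :=
  configCount n a M fun x => HasMargins a 0 M x ∧
    p (lastIndex x) (penultIndex x) (x (penultIndex x)) (x (lastIndex x))

theorem IsConfig.fitsLast (h : IsConfig a M x) (hx : HasMargins a 0 M x) :
    FitsLast a M (lastIndex x) (penultIndex x) (x (penultIndex x)) (x (lastIndex x)) :=
  ⟨h.natAbs_penultIndex_lt, h.natAbs_le _,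
    h.letter_lt _ _ (penultIndex_ne x) (natAbs_le_lastIndex x _), (hx _).1⟩

/-- The value of the last letter reflected at `s / 2`. -/
noncomputable def reflectLast (s : ℤ) (x : Fin n → ℤ) : Fin n → ℤ :=
  Function.update x (lastIndex x) (s - x (lastIndex x))

/-- A letter that fits after the last but one fits after all earlier ones, since those at distance
at most `a` from it are also at distance at most `a` from the last but one. -/
theorem isConfig_update_lastIndex (h : IsConfig a M x) {u : ℤ}
    (hu : FitsLast a M' (lastIndex x) (penultIndex x) (x (penultIndex x)) u) :
    IsConfig a M' (Function.update x (lastIndex x) u) := by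
  obtain ⟨hlt, hle, hletter, -⟩ := hu
  have hpen := fun k (hk : k ≠ lastIndex x) => natAbs_le_penultIndex hk
  refine ⟨fun k => ?_, fun k => ?_, fun i k hik h1 h2 => ?_⟩
  · rcases eq_or_ne k (lastIndex x) with rfl | hk
    · rw [Function.update_self]
      omega
    · simpa only [Function.update_of_ne hk] using h.ne_zero k
  · rcases eq_or_ne k (lastIndex x) with rfl | hk
    · rwa [Function.update_self]
    · have := hpen k hk
      rw [Function.update_of_ne hk]
      omega
  · rcases eq_or_ne i (lastIndex x) with rfl | hi
    · rw [Function.update_self, Function.update_of_ne hik.symm] at h1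
      have := hpen k hik.symm
      omega
    rw [Function.update_of_ne hi] at h1 h2 ⊢
    rcases eq_or_ne k (lastIndex x) with rfl | hk
    · rw [Function.update_self] at h1 h2 ⊢
      have := hpen i hi
      exact (h.letter_le this (by omega)).trans_lt (hletter (by omega))
    · rw [Function.update_of_ne hk] at h1 h2 ⊢
      exact h.letter_lt i k hik h1 h2

theorem IsConfig.lastIndex_reflectLast (h : IsConfig a M x)
    (hu : FitsLast a M' (lastIndex x) (penultIndex x) (x (penultIndex x)) (s - x (lastIndex x))) :
    lastIndex (reflectLast s x) = lastIndex x := by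
  refine (isConfig_update_lastIndex h hu).lastIndex_eq fun k => ?_
  rcases eq_or_ne k (lastIndex x) with rfl | hk
  · rfl
  · rw [Function.update_self, Function.update_of_ne hk]
    exact (natAbs_le_penultIndex hk).trans hu.1.le

theorem IsConfig.penultIndex_reflectLast (h : IsConfig a M x)
    (hu : FitsLast a M' (lastIndex x) (penultIndex x) (x (penultIndex x)) (s - x (lastIndex x))) :
    penultIndex (reflectLast s x) = penultIndex x := by
  refine (isConfig_update_lastIndex h hu).penultIndex_eq ?_ fun k hk => ?_
  · exact (h.lastIndex_reflectLast hu).symm ▸ penultIndex_ne x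
  · replace hk : k ≠ lastIndex x := (h.lastIndex_reflectLast hu) ▸ hk
    rw [Function.update_of_ne hk, Function.update_of_ne (penultIndex_ne x)]
    exact natAbs_le_penultIndex hk

theorem IsConfig.reflectLast_reflectLast (h : IsConfig a M x)
    (hu : FitsLast a M' (lastIndex x) (penultIndex x) (x (penultIndex x)) (s - x (lastIndex x))) :
    reflectLast s (reflectLast s x) = x := by
  rw [reflectLast, h.lastIndex_reflectLast hu]
  simp [reflectLast]

theorem hasMargins_reflectLast (hx : HasMargins a 0 M x) (h' : IsConfig a M' (reflectLast s x))
    (hu : 0 < s - x (lastIndex x) → a < s - x (lastIndex x)) :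
    HasMargins a 0 M' (reflectLast s x) := by
  refine fun k => ⟨?_, by have := h'.natAbs_le k; omega⟩
  rcases eq_or_ne k (lastIndex x) with rfl | hk
  · simpa only [reflectLast, Function.update_self] using hu
  · simpa only [reflectLast, Function.update_of_ne hk] using (hx k).1

theorem lastCount_reflect (s : ℤ) {p q : Fin n → Fin n → ℤ → ℤ → Prop}
    (hpq : ∀ i j (w u : ℤ), i ≠ j → (0 < w → a < w) →
      (FitsLast a M i j w u ∧ p i j w u ↔
        FitsLast a M' i j w (s - u) ∧ q i j w (s - u))) :
    lastCount n a M p = lastCount n a M' q := by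
  have mapsTo {M M' : ℤ} {p q : Fin n → Fin n → ℤ → ℤ → Prop}
      (hpq : ∀ i j (w u : ℤ), i ≠ j → (0 < w → a < w) → FitsLast a M i j w u ∧ p i j w u →
        FitsLast a M' i j w (s - u) ∧ q i j w (s - u)) (x) (h : IsConfig a M x)
      (hx : HasMargins a 0 M x ∧
        p (lastIndex x) (penultIndex x) (x (penultIndex x)) (x (lastIndex x))) :
      let y := reflectLast s x
      IsConfig a M' y ∧ (HasMargins a 0 M' y ∧
        q (lastIndex y) (penultIndex y) (y (penultIndex y)) (y (lastIndex y))) ∧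
      reflectLast s y = x := by
    obtain ⟨hu, hq⟩ := hpq _ _ _ _ (penultIndex_ne x).symm (hx.1 _).1
      ⟨h.fitsLast hx.1, hx.2⟩
    have h' : IsConfig a M' (reflectLast s x) := isConfig_update_lastIndex h hu
    refine ⟨h', ⟨hasMargins_reflectLast hx.1 h' hu.2.2.2, ?_⟩, h.reflectLast_reflectLast hu⟩
    rw [h.lastIndex_reflectLast hu, h.penultIndex_reflectLast hu]
    simpa [reflectLast, penultIndex_ne] using hq
  refine configCount_eq_of_invOn (reflectLast s) (reflectLast s)
    (mapsTo fun i j w u hij hwa => (hpq i j w u hij hwa).1)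
    (mapsTo fun i j w u hij hwa hu => (hpq i j w (s - u) hij hwa).2 ?_)
  simpa using hu

theorem lastCount_congr {p q : Fin n → Fin n → ℤ → ℤ → Prop}
    (hpq : ∀ i j w u, FitsLast a M i j w u → (p i j w u ↔ q i j w u)) :
    lastCount n a M p = lastCount n a M q :=
  configCount_congr fun _ h => and_congr_right fun hx => hpq _ _ _ _ (h.fitsLast hx)

theorem lastCount_eq_add (p q : Fin n → Fin n → ℤ → ℤ → Prop) :
    lastCount n a M p = lastCount n a M (fun i j w u => p i j w u ∧ q i j w u) +
      lastCount n a M (fun i j w u => p i j w u ∧ ¬ q i j w u) := by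
  simp only [lastCount, ← and_assoc]
  exact configCount_eq_add _ _

end LastLetter

section LastNegative

variable {n a : ℕ} [Nontrivial (Fin n)] {M : ℤ}

/-- The number of configurations with `HasMargins a 0` whose last letter is negative and has a
smaller coordinate than the last but one. -/
noncomputable def negLastCount (n a : ℕ) [Nontrivial (Fin n)] (M : ℤ) : ℕ :=
  lastCount n a M fun i j _ u => u < 0 ∧ i < j

theorem lastCount_pos_of_lt :
    lastCount n a M (fun i j _ u => 0 < u ∧ i < j) = negLastCount n a (M - a) := by
  refine lastCount_reflect a fun i j w u _ _ => ?_
  simp only [FitsLast, letter]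
  omega

theorem lastCount_pos_of_not_lt :
    lastCount n a M (fun i j _ u => 0 < u ∧ ¬ i < j) =
      lastCount n a M fun i j _ u => u < 0 ∧ ¬ i < j := by
  refine lastCount_reflect 0 fun i j w u _ _ => ?_
  simp only [FitsLast, letter]
  omega

theorem negLastCount_of_le {M' : ℤ} (hM' : M' ≤ M) :
    negLastCount n a M' =
      lastCount n a M fun i j _ u => (u < 0 ∧ i < j) ∧ (u.natAbs : ℤ) ≤ M' := by
  rw [negLastCount, lastCount, configCount_truncate hM']
  refine configCount_congr fun x _ => ⟨fun ⟨⟨hx, hp⟩, hle⟩ => ?_, fun ⟨hx, hp, _⟩ => ?_⟩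
  · exact ⟨fun k => ⟨(hx k).1, by have := hle k; omega⟩, hp, hle _⟩
  · have hle' (k) : ((x k).natAbs : ℤ) ≤ M' := by
      have := natAbs_le_lastIndex x k
      omega
    exact ⟨⟨fun k => ⟨(hx k).1, by have := hle' k; omega⟩, hp⟩, hle'⟩

/-- The reflection replaces `|u|` by `2 * M + 1 - a - |u|`, so it exchanges the condition
`|u| + |w| ≤ 2 * M - a` with `|w| < |u|`. -/
theorem lastCount_far_from_end {f c : ℕ} (hf : f = a / 2) (hc : c = (a + 1) / 2) :
    lastCount n a M (fun i j w u =>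
        ((u < 0 ∧ i < j) ∧ (u.natAbs + w.natAbs : ℤ) ≤ 2 * M - a) ∧ ¬ (u.natAbs : ℤ) ≤ M - f) =
      lastCount n a M fun i j _ u =>
        ((u < 0 ∧ i < j) ∧ (u.natAbs : ℤ) ≤ M - c) ∧ ¬ (u.natAbs : ℤ) ≤ M - a := by
  refine lastCount_reflect (a - (2 * M + 1)) fun i j w u _ _ => ?_
  simp only [FitsLast, letter]
  omega

theorem lastCount_add_negLastCount {f c : ℕ} (hf : f = a / 2) (hc : c = (a + 1) / 2) :
    lastCount n a M (fun i j w u =>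
        (u < 0 ∧ i < j) ∧ (u.natAbs + w.natAbs : ℤ) ≤ 2 * M - a) + negLastCount n a (M - a) =
      negLastCount n a (M - f) + negLastCount n a (M - c) := by
  rw [negLastCount_of_le (M := M) (M' := M - a) (by omega),
    negLastCount_of_le (M := M) (M' := M - f) (by omega),
    negLastCount_of_le (M := M) (M' := M - c) (by omega),
    lastCount_eq_add (fun i j w u => (u < 0 ∧ i < j) ∧ (u.natAbs + w.natAbs : ℤ) ≤ 2 * M - a)
      (fun _ _ _ u => (u.natAbs : ℤ) ≤ M - f),
    lastCount_eq_add (fun i j _ u => (u < 0 ∧ i < j) ∧ (u.natAbs : ℤ) ≤ M - c)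
      (fun _ _ _ u => (u.natAbs : ℤ) ≤ M - a),
    lastCount_far_from_end hf hc]
  have near_f : lastCount n a M (fun i j w u => ((u < 0 ∧ i < j) ∧
      (u.natAbs + w.natAbs : ℤ) ≤ 2 * M - a) ∧ (u.natAbs : ℤ) ≤ M - f) =
      lastCount n a M fun i j _ u => (u < 0 ∧ i < j) ∧ (u.natAbs : ℤ) ≤ M - f :=
    lastCount_congr fun i j w u hu => by have := hu.1; omega
  have near_a : lastCount n a M (fun i j _ u => ((u < 0 ∧ i < j) ∧
      (u.natAbs : ℤ) ≤ M - c) ∧ (u.natAbs : ℤ) ≤ M - a) =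
      lastCount n a M fun i j _ u => (u < 0 ∧ i < j) ∧ (u.natAbs : ℤ) ≤ M - a :=
    lastCount_congr fun i j w u _ => by omega
  omega

theorem lastCount_pos :
    lastCount n a M (fun _ _ _ u => 0 < u) =
      classCount n a (M - a) (true, true) + classCount n a M (false, true) := by
  have hsplit : lastCount n a M (fun _ _ _ u => 0 < u) =
      ∑ b, configCount n a M fun x => endSigns x = (b, true) ∧ HasMargins a 0 M x := by
    rw [lastCount, configCount_eq_sum_fiber fun x => decide (0 < x (firstIndex x))]
    refine Finset.sum_congr rfl fun b _ => configCount_congr fun x _ => ?_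
    simp only [endSigns, Prod.mk.injEq, decide_eq_true_eq]
    tauto
  simpa [configCount_endSigns_hasMargins] using hsplit

theorem lastCount_neg :
    lastCount n a M (fun _ _ _ u => u < 0) =
      classCount n a (M - a) (true, false) + classCount n a M (false, false) := by
  have hsplit : lastCount n a M (fun _ _ _ u => u < 0) =
      ∑ b, configCount n a M fun x => endSigns x = (b, false) ∧ HasMargins a 0 M x := by
    rw [lastCount, configCount_eq_sum_fiber fun x => decide (0 < x (firstIndex x))]
    refine Finset.sum_congr rfl fun b _ => configCount_congr fun x h => ?_
    have := h.ne_zero (lastIndex x)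
    have hneg : x (lastIndex x) < 0 ↔ ¬ 0 < x (lastIndex x) := by omega
    simp only [endSigns, Prod.mk.injEq, decide_eq_false_iff_not, hneg]
    tauto
  simpa [configCount_endSigns_hasMargins] using hsplit

theorem negLastCount_add_classCount (M : ℤ) :
    negLastCount n a M + classCount n a (M - a) (true, true) =
      classCount n a M (true, true) + negLastCount n a (M - a) := by
  have hpos := lastCount_pos (n := n) (a := a) (M := M)
  have hneg := lastCount_neg (n := n) (a := a) (M := M)
  rw [lastCount_eq_add _ fun i j _ _ => i < j] at hpos hneg
  rw [lastCount_pos_of_lt, lastCount_pos_of_not_lt, classCount_false_true] at hpos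
  rw [← classCount_true_true, ← negLastCount] at hneg
  omega

theorem negLastCount_eq_classCount (ha : 0 < a) (M : ℤ) :
    negLastCount n a M = classCount n a M (true, true) :=
  eq_of_add_shift_eq ha
    (fun _ hM => (configCount_of_neg hM _).trans (configCount_of_neg hM _).symm)
    negLastCount_add_classCount M

end LastNegative

section NoWrap

variable {n a f c : ℕ} {M : ℤ} {x : Fin n → ℤ}

/-- The part of the condition on pairs of residues modulo `2 * M + 1` that comes from wrapping
around at the end `M` of the range; `IsConfig` is the other part. -/
def NoWrap (a : ℕ) (M : ℤ) (x : Fin n → ℤ) : Prop :=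
  ∀ i j, i < j → x i < 0 → ((x i).natAbs + (x j).natAbs : ℤ) ≤ 2 * M - a

theorem IsConfig.natAbs_lt_of_wrap (h : IsConfig a M x) {i j : Fin n} (hij : i < j)
    (hi : x i < 0) (hwrap : 2 * M - a < ((x i).natAbs + (x j).natAbs : ℤ)) :
    (x j).natAbs < (x i).natAbs := by
  by_contra hle
  have := h.natAbs_le j
  have := h.letter_lt i j hij.ne (by omega) (by omega)
  simp only [letter] at this
  omega

/-- A pair that wraps around, and the last two letters, all lie within `a` of each other, so their
letters increase. -/
theorem IsConfig.noWrap_iff [Nontrivial (Fin n)] (h : IsConfig a M x) :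
    NoWrap a M x ↔ (lastIndex x < penultIndex x → x (lastIndex x) < 0 →
      ((x (lastIndex x)).natAbs + (x (penultIndex x)).natAbs : ℤ) ≤ 2 * M - a) := by
  refine ⟨fun hx => hx _ _, fun hx i j hij hi => ?_⟩
  by_contra hwrap
  have hml := h.natAbs_penultIndex_lt
  have hpen := fun k (hk : k ≠ lastIndex x) => natAbs_le_penultIndex hk
  have hlast := natAbs_le_lastIndex x
  have hne := penultIndex_ne x
  set l := lastIndex x
  set m := penultIndex x
  have := h.natAbs_le i
  have := h.natAbs_le j
  have := h.natAbs_le l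
  have hji := h.natAbs_lt_of_wrap hij hi (not_le.1 hwrap)
  have hjm : (x j).natAbs ≤ (x m).natAbs := hpen j fun hjl => by
    have := hlast i
    rw [hjl] at hji
    omega
  have h_il := h.letter_le (hlast i) (by omega)
  have h_ml := h.letter_lt m l hne hml.le (by omega)
  have h_jm := h.letter_le hjm (by omega)
  have hlm : l < m := by
    rcases eq_or_ne i l with rfl | hil
    · simp only [letter] at h_il h_ml h_jm
      omega
    · have h_im := h.letter_le (hpen i hil) (by omega)
      simp only [letter] at h_ml h_im
      omega
  have hl : x l < 0 := by
    have := h.ne_zero l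
    simp only [letter] at h_il
    omega
  have := hx hlm hl
  have := hlast i
  omega

theorem IsConfig.noWrap_of_hasMargins (h : IsConfig a M x) (hc : a ≤ 2 * c)
    (hx : HasMargins f c M x) : NoWrap a M x := by
  intro i j hij hi
  have := (hx i).2 hi
  have := (hx j).2
  have := h.natAbs_le j
  have hlt := h.letter_lt i j hij.ne
  simp only [letter] at hlt
  omega

theorem configCount_noWrap_add_negLastCount [Nontrivial (Fin n)] (hf : f = a / 2)
    (hc : c = (a + 1) / 2) :
    configCount n a M (fun x => HasMargins a 0 M x ∧ NoWrap a M x) + negLastCount n a M +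
        negLastCount n a (M - a) =
      configCount n a M (HasMargins a 0 M) + negLastCount n a (M - f) +
        negLastCount n a (M - c) := by
  have hwrap : configCount n a M (fun x => HasMargins a 0 M x ∧ ¬ NoWrap a M x) =
      lastCount n a M fun i j w u =>
        (u < 0 ∧ i < j) ∧ ¬ (u.natAbs + w.natAbs : ℤ) ≤ 2 * M - a :=
    configCount_congr fun x h => by
      rw [h.noWrap_iff]
      tauto
  have hmargins := configCount_eq_add (n := n) (a := a) (M := M) (HasMargins a 0 M) (NoWrap a M)
  have hneg := lastCount_eq_add (n := n) (a := a) (M := M) (fun i j _ u => u < 0 ∧ i < j)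
    fun _ _ w u => (u.natAbs + w.natAbs : ℤ) ≤ 2 * M - a
  have hsum := lastCount_add_negLastCount (n := n) (M := M) hf hc
  rw [← negLastCount] at hneg
  omega

theorem configCount_noWrap_eq [Nontrivial (Fin n)] (hf : f = a / 2)
    (hc : c = (a + 1) / 2) :
    configCount n a M (fun x => HasMargins a 0 M x ∧ NoWrap a M x) =
      configCount n a M (fun x => HasMargins f c M x ∧ NoWrap a M x) := by
  obtain rfl | ha := a.eq_zero_or_pos
  · rw [hf, hc]
  have hdrop : configCount n a M (fun x => HasMargins f c M x ∧ NoWrap a M x) =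
      configCount n a M (HasMargins f c M) :=
    configCount_congr fun x h => and_iff_left_of_imp (h.noWrap_of_hasMargins (by omega))
  have hsum := configCount_noWrap_add_negLastCount (n := n) (M := M) hf hc
  have hB := configCount_hasMargins (n := n) (M := M) (le_refl a) (Nat.zero_le a)
  have hC := configCount_hasMargins (n := n) (M := M) (show f ≤ a by omega)
    (show c ≤ a by omega)
  have hfc : M - f - c = M - a := by omega
  simp only [negLastCount_eq_classCount ha] at hsum
  simp only [classCount_false_true, ← classCount_true_true, hfc, Nat.cast_zero, sub_zero]
    at hB hC
  omega

end NoWrap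

section Residues

variable {n a f c M : ℕ}

theorem avoids_intCast_iff_s7 {m : ℤ} (hm : (m.natAbs : ℤ) ≤ 2 * M) :
    Avoids (m : ZMod (2 * M + 1)) 0 a ↔ (m < 0 ∨ a < m) ∧ a < m + (2 * M + 1) := by
  simp only [Avoids, ne_eq, ZMod.intCast_eq_intCast_iff_dvd_sub]
  push_cast
  constructor
  · intro h
    refine ⟨?_, ?_⟩
    · by_contra hc
      exact h m (by omega) (by omega) (by simp)
    · by_contra hc
      exact h (m + (2 * M + 1)) (by omega) (by omega) (by simp)
  · rintro ⟨hm0, hma⟩ k hk0 hka ⟨t, ht⟩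
    have hm_le : m ≤ 2 * M := by omega
    have ht2 : t < 2 := by nlinarith
    have ht0 : -1 < t := by nlinarith
    interval_cases t <;> omega

theorem ncard_setOf_zmod (P : (Fin n → ZMod (2 * M + 1)) → Prop) :
    Set.ncard {x | P x} =
      Set.ncard {x : Fin n → ℤ | (∀ i, ((x i).natAbs : ℤ) ≤ M) ∧ P fun i => (x i : ℤ)} := by
  have hinv : Set.InvOn (fun (y : Fin n → ℤ) i => (y i : ZMod (2 * M + 1)))
      (fun x i => (x i).valMinAbs) {x | P x}
      {x : Fin n → ℤ | (∀ i, ((x i).natAbs : ℤ) ≤ M) ∧ P fun i => (x i : ℤ)} := by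
    refine ⟨fun x _ => funext fun i => (x i).coe_valMinAbs, fun y hy => funext fun i => ?_⟩
    have := hy.1 i
    refine (ZMod.valMinAbs_spec _ _).2 ⟨rfl, ?_, ?_⟩ <;> push_cast <;> omega
  refine Set.BijOn.ncard_eq (hinv.bijOn (fun x hx => ⟨fun i => ?_, ?_⟩) fun y hy => hy.2)
  · have := ZMod.natAbs_valMinAbs_le (x i)
    dsimp only
    omega
  · rwa [funext fun i => (x i).coe_valMinAbs]

theorem avoids_sub_and_avoids_add_iff {x : Fin n → ℤ} (hx0 : ∀ i, x i ≠ 0)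
    (hxM : ∀ i, ((x i).natAbs : ℤ) ≤ M) (hxa : ∀ i, 0 < x i → a < 2 * x i) :
    (∀ i j, i < j → Avoids ((x i : ZMod (2 * M + 1)) - (x j : ZMod (2 * M + 1))) 0 a ∧
      Avoids ((x i : ZMod (2 * M + 1)) + (x j : ZMod (2 * M + 1))) 0 a) ↔
      IsConfig a M x ∧ NoWrap a M x := by
  have hpair (i j) : (Avoids ((x i : ZMod (2 * M + 1)) - (x j : ZMod (2 * M + 1))) 0 a ∧
      Avoids ((x i : ZMod (2 * M + 1)) + (x j : ZMod (2 * M + 1))) 0 a) ↔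
      ((x i - x j < 0 ∨ a < x i - x j) ∧ a < x i - x j + (2 * M + 1)) ∧
        (x i + x j < 0 ∨ a < x i + x j) ∧ a < x i + x j + (2 * M + 1) := by
    have := hxM i
    have := hxM j
    rw [← Int.cast_sub, ← Int.cast_add, avoids_intCast_iff_s7 (by omega),
      avoids_intCast_iff_s7 (by omega)]
  simp only [hpair]
  refine ⟨fun h => ⟨⟨hx0, hxM, fun i k hik h1 h2 => ?_⟩, fun i j hij hi => ?_⟩,
    fun ⟨h, hwrap⟩ i j hij => ?_⟩
  · have := hx0 i
    have := hx0 k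
    have hlt := h i k
    have hgt := h k i
    simp only [letter]
    omega
  · have := h i j hij
    have := hx0 j
    omega
  · have := hwrap i j hij
    have hle := h.letter_lt i j hij.ne
    have hge := h.letter_lt j i hij.ne'
    have := hx0 i
    have := hx0 j
    have := hxM i
    have := hxM j
    have := hxa i
    have := hxa j
    simp only [letter] at hle hge
    omega

theorem ncard_avoiding_eq_configCount (hf : a ≤ 2 * f + 1)
    {Q : ZMod (2 * M + 1) → Prop}
    (hQ : ∀ v : ℤ, (v.natAbs : ℤ) ≤ M →
      (Q v ↔ v ≠ 0 ∧ (0 < v → f < v) ∧ (v < 0 → -v + c ≤ M))) :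
    Set.ncard {x : Fin n → ZMod (2 * M + 1) | (∀ i, Q (x i)) ∧
        ∀ i j, i < j → Avoids (x i - x j) 0 a ∧ Avoids (x i + x j) 0 a} =
      configCount n a M fun x => HasMargins f c M x ∧ NoWrap a M x := by
  rw [ncard_setOf_zmod, configCount]
  congr 1
  ext x
  constructor
  · rintro ⟨hxM, hxQ, hpair⟩
    have hx (i) := (hQ (x i) (hxM i)).1 (hxQ i)
    have hxa (i) (hi : 0 < x i) : (a : ℤ) < 2 * x i := by
      have := (hx i).2.1 hi
      omega
    obtain ⟨h, hwrap⟩ :=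
      (avoids_sub_and_avoids_add_iff (fun i => (hx i).1) hxM hxa).1 hpair
    exact ⟨h, fun i => (hx i).2, hwrap⟩
  · rintro ⟨h, hx, hwrap⟩
    have hxa (i) (hi : 0 < x i) : (a : ℤ) < 2 * x i := by
      have := (hx i).1 hi
      omega
    exact ⟨h.natAbs_le, fun i => (hQ _ (h.natAbs_le i)).2 ⟨h.ne_zero i, hx i⟩,
      (avoids_sub_and_avoids_add_iff h.ne_zero h.natAbs_le hxa).2 ⟨h, hwrap⟩⟩

/-- When `M < a`, all letters are negative and increase, hence lie in reverse order of their
coordinates, and `NoWrap` bounds each of them by `2 * M - a`. -/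
theorem IsConfig.hasMargins_sub_iff [Nontrivial (Fin n)] {x : Fin n → ℤ} (h : IsConfig a M x)
    (hwrap : NoWrap a M x) : HasMargins a (a - M) M x ↔ HasMargins a 0 M x := by
  refine ⟨fun hx k => ⟨(hx k).1, fun hk => ?_⟩, fun hx k => ⟨(hx k).1, fun hk => ?_⟩⟩
  · have := h.natAbs_le k
    omega
  · obtain ⟨i, hik⟩ := exists_ne k
    have := (hx i).1
    have := h.ne_zero i
    have := h.natAbs_le i
    have := h.natAbs_le k
    have := hwrap i k
    have := hwrap k i
    have := h.letter_lt i k hik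
    simp only [letter] at this
    omega

theorem N_B_eq_configCount [Nontrivial (Fin n)] :
    N_B n (2 * M + 1) 0 a =
      configCount n a M fun x => HasMargins a 0 M x ∧ NoWrap a M x := by
  calc N_B n (2 * M + 1) 0 a
    _ = configCount n a M fun x => HasMargins a (a - M : ℕ) M x ∧ NoWrap a M x :=
      ncard_avoiding_eq_configCount (by omega) (Q := fun z => Avoids z 0 a) fun v hv => by
        rw [avoids_intCast_iff_s7 (by omega)]
        omega
    _ = configCount n a M fun x => HasMargins a 0 M x ∧ NoWrap a M x :=
      configCount_congr fun x h => and_congr_left h.hasMargins_sub_iff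

theorem N_C_eq_configCount :
    N_C n (2 * M + 1) 0 a =
      configCount n a M fun x => HasMargins (a / 2) ((a + 1) / 2) M x ∧ NoWrap a M x := by
  refine ncard_avoiding_eq_configCount (by omega) (Q := fun z => Avoids (2 * z) 0 a)
    fun v hv => ?_
  rw [← Int.cast_ofNat, ← Int.cast_mul, avoids_intCast_iff_s7 (by omega)]
  omega

theorem N_B_eq_N_C_of_subsingleton [Subsingleton (Fin n)] {q : ℕ} (hq : Odd q) (u v : ℤ) :
    N_B n q u v = N_C n q u v := by
  obtain ⟨b, hb⟩ : IsUnit (2 : ZMod q) := by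
    exact_mod_cast (ZMod.isUnit_iff_coprime 2 q).2 (Nat.coprime_two_left.2 hq)
  have hpair (i j : Fin n) : ¬ i < j := (Subsingleton.elim i j).not_lt
  let e : (Fin n → ZMod q) ≃ (Fin n → ZMod q) := Equiv.piCongrRight fun _ => b.mulLeft
  simp only [N_B, N_C, hpair, false_imp_iff, implies_true, and_true, ← hb]
  exact (Set.ncard_preimage_of_injective_subset_range e.injective
    fun y _ => e.surjective y).symm

end Residues

theorem statement7_general (n a : ℕ) {q : ℕ} (hq : Odd q) :
    N_B n q 0 (a : ℤ) = N_C n q 0 (a : ℤ) := by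
  rcases subsingleton_or_nontrivial (Fin n) with _ | _
  · exact N_B_eq_N_C_of_subsingleton hq 0 a
  · obtain ⟨M, rfl⟩ := hq
    rw [N_B_eq_configCount, N_C_eq_configCount]
    exact configCount_noWrap_eq rfl rfl

/-- Proposition 4.3. For all large odd `q`, the number of points
avoiding the `B_n` deformation equals the number avoiding the `C_n` deformation. -/
theorem statement7 (n a : ℕ) (hn : 2 ≤ n) (ha : 1 ≤ a) :
    ∃ N : ℕ, ∀ q : ℕ, Odd q → N < q →
      N_B n q 0 (a : ℤ) = N_C n q 0 (a : ℤ) := by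
  exact ⟨0, fun q hq _ => statement7_general n a hq⟩
end
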